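/- Pricing–hedging duality with traded puts for bounded claims: Suppose the market input (X_p, 𝒫, 𝔓) admits no weak free lunch with vanishing risk, and let μ₁,…,μ_n be the measures defined by μ_i([0, K]) = p_i′(K). Let G : ℝ₊^n → [−∞, ∞) be an upper semi-continuous function bounded from above. Then sup_{ℙ ∈ M⁻_{μ,𝔓}} E_ℙ[G] = sup{E_ℙ[G(S)] : ℙ a market calibrated model} = inf{𝒫(X) : there exists an admissible put-based strategy (X, Δ) with Ψ_{X,Δ} ≥ G on 𝔓} = V^{(p)}_{μ,𝔓}(G). -/

import Mathlib

open MeasureTheory Set Filter Topology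
open scoped ENNReal NNReal Classical

noncomputable section

namespace RobustFin

/-- Canonical path space: the values `S₀, S₁, …, S_n` of the asset. -/
abbrev Path (n : ℕ) := Fin (n + 1) → ℝ

/-- Paths starting at `s₀` with nonnegative coordinates: the canonical space `Ω`. -/
def Omega (n : ℕ) (s₀ : ℝ) : Set (Path n) := {ω | ω 0 = s₀ ∧ ∀ i, 0 ≤ ω i}

/-- The first `j` coordinates `S₁, …, S_j` of a path. -/
def restr {n : ℕ} (j : Fin n) (ω : Path n) : Fin j → ℝ :=
  fun i => ω ⟨(i : ℕ) + 1, by have h1 := i.isLt; have h2 := j.isLt; omega⟩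

/-- The coordinates `S₁, …, S_n` of a path. -/
def tailCoords {n : ℕ} (ω : Path n) : Fin n → ℝ := fun i => ω i.succ

/-- A dynamic trading strategy: bounded measurable positions `Δ_j(S₁,…,S_j)`. -/
structure Dyn (n : ℕ) where
  pos : (j : Fin n) → (Fin j → ℝ) → ℝ
  meas : ∀ j, Measurable (pos j)
  bdd : ∀ j, ∃ C, ∀ x, |pos j x| ≤ C

/-- No short selling: all dynamic positions are nonnegative. -/
def Dyn.Nonneg {n : ℕ} (D : Dyn n) : Prop := ∀ j x, 0 ≤ D.pos j x

/-- Gains from dynamic trading: `Σ_j Δ_j(S₁,…,S_j)(S_{j+1} − S_j)`. -/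
def Dyn.gains {n : ℕ} (D : Dyn n) (ω : Path n) : ℝ :=
  ∑ j : Fin n, D.pos j (restr j ω) * (ω j.succ - ω j.castSucc)

/-- A static option portfolio: a constant (cash) position plus a finite linear
combination of options with maturity indices `idx` and nonnegative strikes. -/
structure Static (n : ℕ) where
  const : ℝ
  m : ℕ
  coeff : Fin m → ℝ
  idx : Fin m → Fin n
  strike : Fin m → ℝ
  strike_nonneg : ∀ k, 0 ≤ strike k

/-- Payoff of the portfolio when the options are call options. -/
def Static.callPayoff {n : ℕ} (X : Static n) (ω : Path n) : ℝ :=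
  X.const + ∑ k, X.coeff k * max (ω (X.idx k).succ - X.strike k) 0

/-- Payoff of the portfolio when the options are put options. -/
def Static.putPayoff {n : ℕ} (X : Static n) (ω : Path n) : ℝ :=
  X.const + ∑ k, X.coeff k * max (X.strike k - ω (X.idx k).succ) 0

/-- Price of a static portfolio, given the unit option prices `c i K`;
this is the (unique) linear pricing functional determined by the prices. -/
def Static.price {n : ℕ} (X : Static n) (c : Fin n → ℝ → ℝ) : ℝ :=
  X.const + ∑ k, X.coeff k * c (X.idx k) (X.strike k)

/-- Expectation of a real payoff, valued in `EReal`, with the convention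
`∞ − ∞ = −∞` (in `EReal`, `⊤ - ⊤ = ⊥`). -/
def eexp {n : ℕ} (P : Measure (Path n)) (f : Path n → ℝ) : EReal :=
  ((∫⁻ ω, ENNReal.ofReal (f ω) ∂P : ℝ≥0∞) : EReal) -
    ((∫⁻ ω, ENNReal.ofReal (-(f ω)) ∂P : ℝ≥0∞) : EReal)

/-- The positive part of an extended real number, in `ℝ≥0∞`. -/
def posE (x : EReal) : ℝ≥0∞ := if x = ⊤ then ⊤ else ENNReal.ofReal x.toReal

/-- Expectation of an `EReal`-valued payoff, with the convention `∞ − ∞ = −∞`. -/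
def eexpE {n : ℕ} (P : Measure (Path n)) (f : Path n → EReal) : EReal :=
  ((∫⁻ ω, posE (f ω) ∂P : ℝ≥0∞) : EReal) - ((∫⁻ ω, posE (-(f ω)) ∂P : ℝ≥0∞) : EReal)

/-- A market calibrated model for the market with static payoffs `pay` (calls or puts),
prices `c` and prediction set `P`. -/
def Calibrated {n : ℕ} (pay : Static n → Path n → ℝ) (c : Fin n → ℝ → ℝ)
    (P : Set (Path n)) (Q : Measure (Path n)) : Prop :=
  IsProbabilityMeasure Q ∧ Q P = 1 ∧
    ∀ (X : Static n) (D : Dyn n), D.Nonneg →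
      eexp Q (fun ω => pay X ω + D.gains ω) ≤ (X.price c : EReal)

/-- A weak free lunch with vanishing risk. -/
def WFLVR {n : ℕ} (pay : Static n → Path n → ℝ) (c : Fin n → ℝ → ℝ)
    (P : Set (Path n)) : Prop :=
  ∃ (Xs : ℕ → Static n) (Ds : ℕ → Dyn n) (X : Static n) (D : Dyn n) (L : ℝ),
    (∀ k, (Ds k).Nonneg) ∧ D.Nonneg ∧
    (∀ ω ∈ P, Tendsto (fun k => pay (Xs k) ω + (Ds k).gains ω) atTop (nhds 0)) ∧
    (∀ k, ∀ ω ∈ P, pay X ω + D.gains ω ≤ pay (Xs k) ω + (Ds k).gains ω) ∧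
    Tendsto (fun k => (Xs k).price c) atTop (nhds L) ∧ L < 0

/-- A robust uniformly strong arbitrage. -/
def RobustArbitrage {n : ℕ} (pay : Static n → Path n → ℝ) (c : Fin n → ℝ → ℝ)
    (P : Set (Path n)) : Prop :=
  ∃ (X : Static n) (D : Dyn n), D.Nonneg ∧ X.price c < 0 ∧
    ∀ ω ∈ P, 0 ≤ pay X ω + D.gains ω

/-- The superhedging price of `G` over semi-static strategies (no short selling). -/
def V {n : ℕ} (pay : Static n → Path n → ℝ) (c : Fin n → ℝ → ℝ)
    (P : Set (Path n)) (G : Path n → EReal) : EReal :=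
  sInf {q : EReal | ∃ (X : Static n) (D : Dyn n), D.Nonneg ∧ q = (X.price c : EReal) ∧
    ∀ ω ∈ P, G ω ≤ ((pay X ω + D.gains ω : ℝ) : EReal)}

/-- The superhedging price of `G` when the dynamic positions may take both signs. -/
def Vsigned {n : ℕ} (pay : Static n → Path n → ℝ) (c : Fin n → ℝ → ℝ)
    (P : Set (Path n)) (G : Path n → EReal) : EReal :=
  sInf {q : EReal | ∃ (X : Static n) (D : Dyn n), q = (X.price c : EReal) ∧
    ∀ ω ∈ P, G ω ≤ ((pay X ω + D.gains ω : ℝ) : EReal)}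

/-- `Π_μ`: probability measures on the path space with marginals `δ_{s₀}, μ₁, …, μ_n`. -/
def PiMu {n : ℕ} (s₀ : ℝ) (μ : Fin n → Measure ℝ) : Set (Measure (Path n)) :=
  {π | IsProbabilityMeasure π ∧ π (Omega n s₀) = 1 ∧
       ∀ i : Fin n, π.map (fun ω => ω i.succ) = μ i}

/-- The coordinate process is a supermartingale in its natural filtration:
for every Borel `A ⊆ ℝ₊^j`, `∫ 1_A(S₁,…,S_j)(S_{j+1} − S_j) dπ ≤ 0`. -/
def IsSupermartingaleLaw {n : ℕ} (π : Measure (Path n)) : Prop :=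
  ∀ (j : Fin n) (A : Set (Fin j → ℝ)), MeasurableSet A →
    ∫ ω, Set.indicator A (fun _ => (1 : ℝ)) (restr j ω) * (ω j.succ - ω j.castSucc) ∂π ≤ 0

/-- `M⁻_μ`: calibrated supermartingale measures. -/
def MSet {n : ℕ} (s₀ : ℝ) (μ : Fin n → Measure ℝ) : Set (Measure (Path n)) :=
  {π ∈ PiMu s₀ μ | IsSupermartingaleLaw π}

/-- `M⁻_{μ,𝔓}`: calibrated supermartingale measures giving full mass to `P`. -/
def MSetP {n : ℕ} (s₀ : ℝ) (μ : Fin n → Measure ℝ) (P : Set (Path n)) :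
    Set (Measure (Path n)) :=
  {π ∈ MSet s₀ μ | π P = 1}

/-- Assumption A on the marginals. -/
def AssumptionA {n : ℕ} (s₀ : ℝ) (μ : Fin n → Measure ℝ) : Prop :=
  (∀ i, ∫ x, x ∂(μ i) ≤ s₀) ∧
  (∀ i j : Fin n, i ≤ j → ∫ x, x ∂(μ j) ≤ ∫ x, x ∂(μ i)) ∧
  (∀ φ : ℝ → ℝ, ConcaveOn ℝ Set.univ φ → Monotone φ → (∀ x, 0 ≤ φ x) →
    ∀ i j : Fin n, i ≤ j → ∫ x, φ x ∂(μ j) ≤ ∫ x, φ x ∂(μ i))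

/-- Condition C (i): each `c_i` is nonnegative, convex and nonincreasing on `ℝ₊`. -/
def CondC1 {n : ℕ} (c : Fin n → ℝ → ℝ) : Prop :=
  ∀ i, (∀ x, 0 ≤ x → 0 ≤ c i x) ∧ ConvexOn ℝ (Set.Ici 0) (c i) ∧ AntitoneOn (c i) (Set.Ici 0)

/-- Condition C (ii): `s₀ ≥ c₁(0) ≥ … ≥ c_n(0) ≥ 0` and `c_i'(0+) ≥ −1`
(the latter expressed, for convex `c_i`, through the slopes at `0`). -/
def CondC2 {n : ℕ} (s₀ : ℝ) (c : Fin n → ℝ → ℝ) : Prop :=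
  (∀ i, c i 0 ≤ s₀) ∧ (∀ i j : Fin n, i ≤ j → c j 0 ≤ c i 0) ∧ (∀ i, 0 ≤ c i 0) ∧
    (∀ i, ∀ K : ℝ, 0 < K → c i 0 - K ≤ c i K)

/-- Condition C (iii): `c_i(K) → 0` as `K → ∞`. -/
def CondC3 {n : ℕ} (c : Fin n → ℝ → ℝ) : Prop :=
  ∀ i, Tendsto (c i) atTop (nhds 0)

/-- Condition C (iv): for every `x ≥ 0`, `c_i(0) − c_i(x)` is nonincreasing in `i`. -/
def CondC4 {n : ℕ} (c : Fin n → ℝ → ℝ) : Prop :=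
  ∀ x : ℝ, 0 ≤ x → ∀ i j : Fin n, i ≤ j → c j 0 - c j x ≤ c i 0 - c i x

/-- Condition C. -/
def CondC {n : ℕ} (s₀ : ℝ) (c : Fin n → ℝ → ℝ) : Prop :=
  CondC1 c ∧ CondC2 s₀ c ∧ CondC3 c ∧ CondC4 c

/-- Condition P (i). -/
def CondP1 {n : ℕ} (p : Fin n → ℝ → ℝ) : Prop :=
  ∀ i, (∀ x, 0 ≤ x → 0 ≤ p i x) ∧ ConvexOn ℝ (Set.Ici 0) (p i) ∧ MonotoneOn (p i) (Set.Ici 0)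

/-- Condition P (ii): `s₀ ≥ lim (x − p₁(x)) ≥ … ≥ 0` and `0 ≤ p_i'(0+) ≤ 1`. -/
def CondP2 {n : ℕ} (s₀ : ℝ) (p : Fin n → ℝ → ℝ) : Prop :=
  (∃ L : Fin n → ℝ,
    (∀ i, Tendsto (fun x => x - p i x) atTop (nhds (L i))) ∧
    (∀ i, L i ≤ s₀) ∧ (∀ i j : Fin n, i ≤ j → L j ≤ L i) ∧ (∀ i, 0 ≤ L i)) ∧
  (∃ d : Fin n → ℝ,
    (∀ i, Tendsto (fun K => (p i K - p i 0) / K) (nhdsWithin 0 (Set.Ioi 0)) (nhds (d i))) ∧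
    (∀ i, 0 ≤ d i ∧ d i ≤ 1))

/-- Condition P (iii): `p_i(K) → 0` as `K → 0` (within `ℝ₊`). -/
def CondP3 {n : ℕ} (p : Fin n → ℝ → ℝ) : Prop :=
  ∀ i, Tendsto (p i) (nhdsWithin 0 (Set.Ici 0)) (nhds 0)

/-- Condition P (iv): `p_i(x)` is nondecreasing in `i`. -/
def CondP4 {n : ℕ} (p : Fin n → ℝ → ℝ) : Prop :=
  ∀ x : ℝ, 0 ≤ x → ∀ i j : Fin n, i ≤ j → p i x ≤ p j x

/-- Condition P. -/
def CondP {n : ℕ} (s₀ : ℝ) (p : Fin n → ℝ → ℝ) : Prop :=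
  CondP1 p ∧ CondP2 s₀ p ∧ CondP3 p ∧ CondP4 p

/-- The measures `μ_i` defined from the put prices by `μ_i([0,K]) = p_i'(K)`;
equivalently, `p_i(K) = ∫ (K − x)⁺ μ_i(dx)`. -/
def PutPricesFrom {n : ℕ} (p : Fin n → ℝ → ℝ) (μ : Fin n → Measure ℝ) : Prop :=
  (∀ i, IsProbabilityMeasure (μ i)) ∧ (∀ i, μ i (Set.Iio 0) = 0) ∧
  (∀ i, Integrable (fun x => x) (μ i)) ∧
  (∀ i, ∀ K : ℝ, 0 ≤ K → p i K = ∫ x, max (K - x) 0 ∂(μ i))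

/-- The path `(s₀, s₁, …, s_i, x, s_{i+2}, …, s_n)`. -/
def mkPath {n : ℕ} (s₀ : ℝ) (i : Fin n) (s : Fin i → ℝ) (x : ℝ)
    (t : Fin (n - ((i : ℕ) + 1)) → ℝ) : Path n := fun j =>
  if h0 : (j : ℕ) = 0 then s₀
  else if h1 : (j : ℕ) ≤ (i : ℕ) then
    s ⟨(j : ℕ) - 1, by have := j.isLt; have := i.isLt; omega⟩
  else if h2 : (j : ℕ) = (i : ℕ) + 1 then x
  else t ⟨(j : ℕ) - (i : ℕ) - 2, by have := j.isLt; have := i.isLt; omega⟩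

/-- The family `β_i : ℝ₊^i → ℝ` defined recursively by `β_n = 0` and
`β_i(s₁,…,s_i) = (sup_{s_{i+2},…,s_n} limsup_{x→∞} ((β_{i+1}(s₁,…,s_i,x)
 + G(s₁,…,s_i,x,s_{i+2},…,s_n)/x)·1_𝔓)) ∨ 0`. -/
def IsBetaFamily {n : ℕ} (s₀ : ℝ) (P : Set (Path n)) (G : (Fin n → ℝ) → EReal)
    (β : (i : Fin (n + 1)) → (Fin i → ℝ) → ℝ) : Prop :=
  (∀ s, β (Fin.last n) s = 0) ∧
  ∀ (i : Fin n) (s : Fin i → ℝ), (∀ k, 0 ≤ s k) →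
    (β ⟨(i : ℕ), by have := i.isLt; omega⟩ s : EReal) =
      max 0 (⨆ (t : Fin (n - ((i : ℕ) + 1)) → ℝ) (_ : ∀ k, 0 ≤ t k),
        Filter.limsup (fun x : ℝ =>
          if mkPath s₀ i s x t ∈ P then
            ((β ⟨(i : ℕ) + 1, by have := i.isLt; omega⟩ (Fin.snoc s x) : ℝ) : EReal)
              + G (tailCoords (mkPath s₀ i s x t)) * ((x⁻¹ : ℝ) : EReal)
          else 0) Filter.atTop)

/-- Gains of the dynamic strategy `(β_i)`: `β₀(S₁ − s₀) + Σ_i β_i(S₁,…,S_i)(S_{i+1} − S_i)`. -/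
def gainsOf {n : ℕ} (β : (i : Fin (n + 1)) → (Fin i → ℝ) → ℝ) (ω : Path n) : ℝ :=
  ∑ j : Fin n, β ⟨(j : ℕ), by have := j.isLt; omega⟩ (restr j ω) * (ω j.succ - ω j.castSucc)

/-- The penalty function `λ_𝔓(s₁,…,s_n) = (1 + s₁ + … + s_n)·1{(s₁,…,s_n) ∉ 𝔓}`. -/
def lambdaP {n : ℕ} (P : Set (Path n)) (ω : Path n) : ℝ :=
  if ω ∈ P then 0 else 1 + ∑ i : Fin n, ω i.succ

/-- `min(s₀, s₁, …, s_m)`. -/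
def pmin {m : ℕ} (s₀ : ℝ) (s : Fin m → ℝ) : ℝ :=
  Finset.univ.inf' Finset.univ_nonempty
    (fun j : Fin (m + 1) =>
      if h : (j : ℕ) = 0 then s₀ else s ⟨(j : ℕ) - 1, by have := j.isLt; omega⟩)

/-- `max(s₀, s₁, …, s_m)`. -/
def pmax {m : ℕ} (s₀ : ℝ) (s : Fin m → ℝ) : ℝ :=
  Finset.univ.sup' Finset.univ_nonempty
    (fun j : Fin (m + 1) =>
      if h : (j : ℕ) = 0 then s₀ else s ⟨(j : ℕ) - 1, by have := j.isLt; omega⟩)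

/-!
Integrating a superhedge against a calibrated model bounds the expectation of the claim by the
price of the hedge. Conversely, let `c` be a real number below the superhedging price of `H`. The
bounded continuous claims that are acceptable at no cost when every `g ≥ H` may be bought for `c`
form a convex cone, and `-1` does not belong to it. The Riesz extension theorem therefore yields a
linear functional `L` on bounded continuous claims that respects all superhedging prices and
satisfies `c ≤ L g` for every `g ≥ H`. Since `p_i(R) / R → 1`, the put prices make `L` tight, so
`L` is integration against a probability measure `Q` concentrated on the closed set `𝔓`. Its
marginals are the `μ_i`, because put prices determine a distribution, and it is a supermartingale
law, because truncated gains can be superhedged for free. Finally `C - H` is lower semicontinuous,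
hence a supremum of truncated Lipschitz envelopes, and monotone convergence turns `c ≤ L g` for all
`g ≥ H` into `c ≤ E_Q[H]`.
-/

open scoped BoundedContinuousFunction CompactlySupported

/-! ### Semi-static portfolios -/

section Portfolios

variable {n : ℕ}

/-- The union of two option portfolios. -/
instance : Add (Static n) where
  add X Y :=
    { const := X.const + Y.const
      m := X.m + Y.m
      coeff := Fin.append X.coeff Y.coeff
      idx := Fin.append X.idx Y.idx
      strike := Fin.append X.strike Y.strike
      strike_nonneg := Fin.addCases (by simpa using X.strike_nonneg)
        (by simpa using Y.strike_nonneg) }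

/-- Every position of an option portfolio scaled by the same factor. -/
instance : SMul ℝ (Static n) where
  smul a X := { X with const := a * X.const, coeff := fun k => a * X.coeff k }

/-- The portfolio that only holds the amount `a` of cash. -/
def Static.cash (a : ℝ) : Static n where
  const := a
  m := 0
  coeff := Fin.elim0
  idx := Fin.elim0
  strike := Fin.elim0
  strike_nonneg := fun k => k.elim0

/-- The portfolio holding one put with maturity `i` and strike `K`. -/
def Static.put (i : Fin n) (K : ℝ) (hK : 0 ≤ K) : Static n where
  const := 0
  m := 1
  coeff := fun _ => 1
  idx := fun _ => i
  strike := fun _ => K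
  strike_nonneg := fun _ => hK

namespace Static

@[simp]
lemma putPayoff_add (X Y : Static n) (ω : Path n) :
    (X + Y).putPayoff ω = X.putPayoff ω + Y.putPayoff ω := by
  change X.const + Y.const + ∑ k : Fin (X.m + Y.m), Fin.append X.coeff Y.coeff k *
    max (Fin.append X.strike Y.strike k - ω (Fin.append X.idx Y.idx k).succ) 0 = _
  simp only [Fin.sum_univ_add, Fin.append_left, Fin.append_right, putPayoff]
  ring

@[simp]
lemma price_add (X Y : Static n) (p : Fin n → ℝ → ℝ) :
    (X + Y).price p = X.price p + Y.price p := by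
  change X.const + Y.const + ∑ k : Fin (X.m + Y.m), Fin.append X.coeff Y.coeff k *
    p (Fin.append X.idx Y.idx k) (Fin.append X.strike Y.strike k) = _
  simp only [Fin.sum_univ_add, Fin.append_left, Fin.append_right, price]
  ring

@[simp]
lemma putPayoff_smul (a : ℝ) (X : Static n) (ω : Path n) :
    (a • X).putPayoff ω = a * X.putPayoff ω := by
  simp only [putPayoff, mul_add, Finset.mul_sum, ← mul_assoc]
  rfl

@[simp]
lemma price_smul (a : ℝ) (X : Static n) (p : Fin n → ℝ → ℝ) :
    (a • X).price p = a * X.price p := by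
  simp only [price, mul_add, Finset.mul_sum, ← mul_assoc]
  rfl

@[simp]
lemma putPayoff_cash (a : ℝ) (ω : Path n) : (cash a : Static n).putPayoff ω = a :=
  add_eq_left.2 (Fin.sum_univ_zero _)

@[simp]
lemma price_cash (a : ℝ) (p : Fin n → ℝ → ℝ) : (cash a : Static n).price p = a :=
  add_eq_left.2 (Fin.sum_univ_zero _)

@[simp]
lemma putPayoff_put (i : Fin n) {K : ℝ} (hK : 0 ≤ K) (ω : Path n) :
    (put i K hK).putPayoff ω = max (K - ω i.succ) 0 :=
  (zero_add _).trans <| (Fin.sum_univ_one _).trans (one_mul _)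

@[simp]
lemma price_put (i : Fin n) {K : ℝ} (hK : 0 ≤ K) (p : Fin n → ℝ → ℝ) :
    (put i K hK).price p = p i K :=
  (zero_add _).trans <| (Fin.sum_univ_one _).trans (one_mul _)

end Static

/-- The strategy that holds the sum of the positions of two strategies. -/
instance : Add (Dyn n) where
  add D E :=
    { pos := fun j x => D.pos j x + E.pos j x
      meas := fun j => (D.meas j).add (E.meas j)
      bdd := fun j =>
        let ⟨C, hC⟩ := D.bdd j
        let ⟨C', hC'⟩ := E.bdd j
        ⟨C + C', fun x => (abs_add_le _ _).trans (add_le_add (hC x) (hC' x))⟩ }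

/-- Every position of a strategy scaled by the same factor. -/
instance : SMul ℝ (Dyn n) where
  smul a D :=
    { pos := fun j x => a * D.pos j x
      meas := fun j => (D.meas j).const_mul a
      bdd := fun j =>
        let ⟨C, hC⟩ := D.bdd j
        ⟨|a| * C, fun x => (abs_mul a _).trans_le (by gcongr; exact hC x)⟩ }

/-- The strategy that never trades. -/
instance : Zero (Dyn n) where
  zero := { pos := fun _ _ => 0, meas := fun _ => measurable_const, bdd := fun _ => ⟨0, by simp⟩ }

/-- The strategy that trades only in the `j`-th period, with position `Δ`. -/
def Dyn.single (j : Fin n) (Δ : (Fin j → ℝ) → ℝ) (hΔ : Measurable Δ)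
    (hΔb : ∃ C, ∀ x, |Δ x| ≤ C) : Dyn n where
  pos := Function.update (fun _ _ => 0) j Δ
  meas := (Function.forall_update_iff _ fun _ f => Measurable f).2
    ⟨hΔ, fun _ _ => measurable_const⟩
  bdd := (Function.forall_update_iff _
    fun (i : Fin n) (f : (Fin i → ℝ) → ℝ) => ∃ C, ∀ x, |f x| ≤ C).2
      ⟨hΔb, fun _ _ => ⟨0, by simp⟩⟩

namespace Dyn

@[simp]
lemma gains_add (D E : Dyn n) (ω : Path n) : (D + E).gains ω = D.gains ω + E.gains ω := by
  simp only [gains, ← Finset.sum_add_distrib, ← add_mul]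
  rfl

@[simp]
lemma gains_smul (a : ℝ) (D : Dyn n) (ω : Path n) : (a • D).gains ω = a * D.gains ω := by
  simp only [gains, Finset.mul_sum, ← mul_assoc]
  rfl

@[simp]
lemma gains_zero (ω : Path n) : (0 : Dyn n).gains ω = 0 :=
  Finset.sum_eq_zero fun _ _ => zero_mul _

@[simp]
lemma gains_single (j : Fin n) {Δ : (Fin j → ℝ) → ℝ} (hΔ : Measurable Δ)
    (hΔb : ∃ C, ∀ x, |Δ x| ≤ C) (ω : Path n) :
    (single j Δ hΔ hΔb).gains ω = Δ (restr j ω) * (ω j.succ - ω j.castSucc) := by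
  rw [gains, Finset.sum_eq_single j (fun i _ hij => by simp [single, hij]) (by simp)]
  simp [single]

lemma Nonneg.zero : (0 : Dyn n).Nonneg := fun _ _ => le_rfl

lemma Nonneg.add {D E : Dyn n} (hD : D.Nonneg) (hE : E.Nonneg) : (D + E).Nonneg :=
  fun j x => add_nonneg (hD j x) (hE j x)

lemma Nonneg.smul {a : ℝ} (ha : 0 ≤ a) {D : Dyn n} (hD : D.Nonneg) : (a • D).Nonneg :=
  fun j x => mul_nonneg ha (hD j x)

lemma Nonneg.single (j : Fin n) {Δ : (Fin j → ℝ) → ℝ} (hΔ : Measurable Δ)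
    (hΔb : ∃ C, ∀ x, |Δ x| ≤ C) (hΔ₀ : 0 ≤ Δ) : (single j Δ hΔ hΔb).Nonneg :=
  (Function.forall_update_iff _ fun (i : Fin n) (f : (Fin i → ℝ) → ℝ) => ∀ x, 0 ≤ f x).2
    ⟨hΔ₀, fun _ _ _ => le_rfl⟩

end Dyn

/-- On the prediction set `P`, the payoff `h` is dominated by that of an admissible put-based
strategy whose price is at most `q`. -/
def Superhedgeable (p : Fin n → ℝ → ℝ) (P : Set (Path n)) (h : Path n → ℝ) (q : ℝ) : Prop :=
  ∃ (X : Static n) (D : Dyn n), D.Nonneg ∧ X.price p ≤ q ∧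
    ∀ ω ∈ P, h ω ≤ X.putPayoff ω + D.gains ω

namespace Superhedgeable

variable {p : Fin n → ℝ → ℝ} {P : Set (Path n)} {h k : Path n → ℝ} {q r : ℝ}

lemma mono (hh : Superhedgeable p P h q) (hk : ∀ ω ∈ P, k ω ≤ h ω) (hqr : q ≤ r) :
    Superhedgeable p P k r :=
  let ⟨X, D, hD, hX, hXD⟩ := hh
  ⟨X, D, hD, hX.trans hqr, fun ω hω => (hk ω hω).trans (hXD ω hω)⟩

lemma add (hh : Superhedgeable p P h q) (hk : Superhedgeable p P k r) :
    Superhedgeable p P (h + k) (q + r) := by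
  obtain ⟨X, D, hD, hX, hXD⟩ := hh
  obtain ⟨Y, E, hE, hY, hYE⟩ := hk
  refine ⟨X + Y, D + E, hD.add hE, by simpa using add_le_add hX hY, fun ω hω => ?_⟩
  simp only [Pi.add_apply, Static.putPayoff_add, Dyn.gains_add]
  linarith [hXD ω hω, hYE ω hω]

lemma const_mul (hh : Superhedgeable p P h q) {a : ℝ} (ha : 0 ≤ a) :
    Superhedgeable p P (fun ω => a * h ω) (a * q) := by
  obtain ⟨X, D, hD, hX, hXD⟩ := hh
  refine ⟨a • X, a • D, hD.smul ha, by simpa using mul_le_mul_of_nonneg_left hX ha, fun ω hω => ?_⟩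
  rw [Static.putPayoff_smul, Dyn.gains_smul, ← mul_add]
  exact mul_le_mul_of_nonneg_left (hXD ω hω) ha

lemma of_static (X : Static n) : Superhedgeable p P (fun ω => X.putPayoff ω) (X.price p) :=
  ⟨X, 0, Dyn.Nonneg.zero, le_rfl, fun ω _ => by simp⟩

lemma const (a : ℝ) : Superhedgeable p P (fun _ => a) a := by
  simpa only [Static.putPayoff_cash, Static.price_cash] using
    of_static (p := p) (P := P) (Static.cash a)

lemma put (i : Fin n) {K : ℝ} (hK : 0 ≤ K) :
    Superhedgeable p P (fun ω => max (K - ω i.succ) 0) (p i K) := by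
  simpa only [Static.putPayoff_put, Static.price_put] using
    of_static (p := p) (P := P) (Static.put i K hK)

lemma neg_put (i : Fin n) {K : ℝ} (hK : 0 ≤ K) :
    Superhedgeable p P (fun ω => -max (K - ω i.succ) 0) (-p i K) := by
  simpa only [Static.putPayoff_smul, Static.putPayoff_put, Static.price_smul, Static.price_put,
    neg_one_mul] using of_static (p := p) (P := P) ((-1 : ℝ) • Static.put i K hK)

lemma gains {D : Dyn n} (hD : D.Nonneg) : Superhedgeable p P D.gains 0 :=
  ⟨Static.cash 0, D, hD, by simp, fun ω _ => by simp⟩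

lemma V_le (hh : Superhedgeable p P h q) {H : Path n → EReal} (hH : ∀ ω ∈ P, H ω ≤ h ω) :
    V Static.putPayoff p P H ≤ q := by
  obtain ⟨X, D, hD, hX, hXD⟩ := hh
  refine sInf_le_of_le ⟨X, D, hD, rfl, fun ω hω => (hH ω hω).trans ?_⟩
    (EReal.coe_le_coe_iff.2 hX)
  exact EReal.coe_le_coe_iff.2 (hXD ω hω)

end Superhedgeable

end Portfolios

/-! ### Pricing functionals -/

lemma exists_linearMap_nonneg_of_orderUnit {E : Type*} [AddCommGroup E] [Module ℝ E]
    (s : PointedCone ℝ E) {e : E} (he : -e ∉ s) (hs : ∀ y, ∃ t : ℝ, t • e + y ∈ s) :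
    ∃ L : E →ₗ[ℝ] ℝ, L e = 1 ∧ ∀ x ∈ s, 0 ≤ L x := by
  have he₀ : e ≠ 0 := by
    rintro rfl
    exact he (by simp)
  let f : E →ₗ.[ℝ] ℝ := LinearPMap.mkSpanSingleton (σ := RingHom.id ℝ) e 1 he₀
  have hf (x : f.domain) (hx : (x : E) ∈ s) : 0 ≤ f x := by
    obtain ⟨x, hxe⟩ := x
    obtain ⟨a, rfl⟩ := Submodule.mem_span_singleton.1 hxe
    rw [LinearPMap.mkSpanSingleton'_apply]
    by_contra! ha
    have ha' : a < 0 := by simpa using ha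
    have hmem := s.smul_mem (neg_nonneg.2 (inv_nonpos.2 ha'.le)) hx
    rw [smul_smul, neg_mul, inv_mul_cancel₀ ha'.ne, neg_one_smul] at hmem
    exact he hmem
  obtain ⟨L, hLf, hLs⟩ := riesz_extension s f hf fun y =>
    let ⟨t, ht⟩ := hs y
    ⟨⟨t • e, Submodule.mem_span_singleton.2 ⟨t, rfl⟩⟩, ht⟩
  exact ⟨L, (hLf ⟨e, Submodule.mem_span_singleton_self e⟩).trans
    (LinearPMap.mkSpanSingleton_apply ℝ ℝ he₀ (1 : ℝ)), hLs⟩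

section Pricing

variable {n : ℕ} {p : Fin n → ℝ → ℝ} {P : Set (Path n)} {H : Path n → EReal} {C c : ℝ}

/-- A linear functional on bounded continuous claims that never exceeds a superhedging cost. -/
def IsPricingFunctional (p : Fin n → ℝ → ℝ) (P : Set (Path n))
    (L : (Path n →ᵇ ℝ) →ₗ[ℝ] ℝ) : Prop :=
  ∀ (f : Path n →ᵇ ℝ) (q : ℝ), Superhedgeable p P f q → L f ≤ q

/-- The bounded continuous claims `f` that dominate on `P`, up to a static-dynamic position of
zero cost, a multiple of `g - c` for some `g ≥ H`. A functional that is nonnegative on this cone is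
monotone, prices all options correctly and assigns at least the value `c` to every `g ≥ H`. -/
def acceptanceCone (p : Fin n → ℝ → ℝ) (c : ℝ) (hH : ∀ ω ∈ P, H ω ≤ C) :
    PointedCone ℝ (Path n →ᵇ ℝ) where
  carrier := {f | ∃ (l : ℝ) (g : Path n →ᵇ ℝ), 0 ≤ l ∧ (∀ ω ∈ P, H ω ≤ g ω) ∧
    Superhedgeable p P (fun ω => l * (g ω - c) - f ω) 0}
  zero_mem' := ⟨0, .const _ C, le_rfl, hH, by simpa using Superhedgeable.const 0⟩
  add_mem' := by
    rintro f f' ⟨l, g, hl, hg, hf⟩ ⟨l', g', hl', hg', hf'⟩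
    refine ⟨l + l', g ⊓ g', add_nonneg hl hl', fun ω hω => ?_,
      (hf.add hf').mono (fun ω _ => ?_) (by simp)⟩
    · rcases le_total (g ω) (g' ω) with h | h
      · simpa [h] using hg ω hω
      · simpa [h] using hg' ω hω
    · have h₁ := mul_le_mul_of_nonneg_left (min_le_left (g ω) (g' ω)) hl
      have h₂ := mul_le_mul_of_nonneg_left (min_le_right (g ω) (g' ω)) hl'
      simp only [BoundedContinuousFunction.coe_inf, BoundedContinuousFunction.coe_add,
        Pi.inf_apply, Pi.add_apply]
      linarith
  smul_mem' := by
    rintro ⟨a, ha⟩ f ⟨l, g, hl, hg, hf⟩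
    refine ⟨a * l, g, mul_nonneg ha hl, hg, (hf.const_mul ha).mono (fun ω _ => ?_) (by simp)⟩
    exact (show a * l * (g ω - c) - a * f ω = a * (l * (g ω - c) - f ω) by ring).le

lemma neg_one_notMem_acceptanceCone (hH : ∀ ω ∈ P, H ω ≤ C)
    (hc : c ≤ V Static.putPayoff p P H) : (-1 : Path n →ᵇ ℝ) ∉ acceptanceCone p c hH := by
  rintro ⟨l, g, hl, hg, hlg⟩
  -- Enlarging the multiplier at the expense of half of the surplus makes it positive.
  obtain ⟨δ, hδ, hgδ⟩ : ∃ δ > 0, ∀ ω, δ * (g ω - c) ≤ 1 / 2 := by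
    refine ⟨1 / (2 * (‖g - .const _ c‖ + 1)), by positivity, fun ω => ?_⟩
    have h := (le_abs_self _).trans ((g - .const _ c).norm_coe_le_norm ω)
    rw [div_mul_eq_mul_div, one_mul, div_le_div_iff₀ (by positivity) two_pos]
    simp only [BoundedContinuousFunction.coe_sub, Pi.sub_apply,
      BoundedContinuousFunction.const_apply] at h
    linarith
  have hlδ : 0 < l + δ := by positivity
  have hgc : Superhedgeable p P g (c - 1 / (2 * (l + δ))) :=
    ((hlg.const_mul (inv_nonneg.2 hlδ.le)).add (.const (c - 1 / (2 * (l + δ))))).mono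
      (fun ω _ => ?_) (by simp)
  · have hV := EReal.coe_le_coe_iff.1 (hc.trans (hgc.V_le hg))
    have : 0 < 1 / (2 * (l + δ)) := by positivity
    linarith
  · have h := mul_le_mul_of_nonneg_left (hgδ ω) (inv_nonneg.2 hlδ.le)
    have e₁ : (l + δ)⁻¹ * (1 / 2) = 1 / (2 * (l + δ)) := by field_simp
    have e₂ : (l + δ)⁻¹ * (l * (g ω - c) + δ * (g ω - c)) = g ω - c := by field_simp
    simp only [Pi.add_apply, BoundedContinuousFunction.coe_neg, BoundedContinuousFunction.coe_one,
      Pi.neg_apply, Pi.one_apply]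
    linarith

lemma exists_isPricingFunctional (hH : ∀ ω ∈ P, H ω ≤ C)
    (hc : c ≤ V Static.putPayoff p P H) :
    ∃ L, IsPricingFunctional p P L ∧ ∀ g : Path n →ᵇ ℝ, (∀ ω ∈ P, H ω ≤ g ω) → c ≤ L g := by
  have hunit (f : Path n →ᵇ ℝ) : ‖f‖ • 1 + f ∈ acceptanceCone p c hH := by
    refine ⟨0, .const _ C, le_rfl, hH, (Superhedgeable.const 0).mono (fun ω _ => ?_) le_rfl⟩
    have h := (neg_le_abs (f ω)).trans (f.norm_coe_le_norm ω)
    simp only [BoundedContinuousFunction.coe_add, BoundedContinuousFunction.coe_smul,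
      BoundedContinuousFunction.coe_one, Pi.add_apply, Pi.one_apply, smul_eq_mul]
    linarith
  obtain ⟨L, hL₁, hL⟩ := exists_linearMap_nonneg_of_orderUnit _
    (neg_one_notMem_acceptanceCone hH hc) fun f => ⟨_, hunit f⟩
  have hL_const (a : ℝ) : L (a • 1) = a := by rw [map_smul, hL₁, smul_eq_mul, mul_one]
  refine ⟨L, fun f q hf => ?_, fun g hg => ?_⟩
  · have h := hL (q • 1 - f) ⟨0, .const _ C, le_rfl, hH,
      (hf.add (.const (-q))).mono (fun ω _ => by simp [sub_eq_add_neg]) (by simp)⟩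
    rwa [map_sub, hL_const, sub_nonneg] at h
  · have h := hL (g - c • 1) ⟨1, g, zero_le_one, hg,
      (Superhedgeable.const 0).mono (fun ω _ => by simp) le_rfl⟩
    rwa [map_sub, hL_const, sub_nonneg] at h

namespace IsPricingFunctional

variable {L : (Path n →ᵇ ℝ) →ₗ[ℝ] ℝ}

lemma mono_on (hL : IsPricingFunctional p P L) {f g : Path n →ᵇ ℝ}
    (hfg : ∀ ω ∈ P, f ω ≤ g ω) : L f ≤ L g := by
  have h := hL (f - g) 0
    ((Superhedgeable.const 0).mono (fun ω hω => by simpa using hfg ω hω) le_rfl)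
  rwa [map_sub, sub_nonpos] at h

lemma map_const (hL : IsPricingFunctional p P L) (a : ℝ) : L (.const _ a) = a := by
  refine le_antisymm (hL _ a (.const a)) (neg_le_neg_iff.1 ?_)
  rw [← map_neg]
  exact hL _ _ (.const (-a))

lemma map_put (hL : IsPricingFunctional p P L) (i : Fin n) {K : ℝ} (hK : 0 ≤ K)
    {f : Path n →ᵇ ℝ} (hf : ∀ ω ∈ P, f ω = max (K - ω i.succ) 0) : L f = p i K := by
  refine le_antisymm (hL f _ ((Superhedgeable.put i hK).mono (fun ω hω => (hf ω hω).le) le_rfl))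
    (neg_le_neg_iff.1 ?_)
  rw [← map_neg]
  exact hL _ _ ((Superhedgeable.neg_put i hK).mono (fun ω hω => by simp [hf ω hω]) le_rfl)

end IsPricingFunctional

end Pricing
/-! ### Representation of tight positive functionals -/

section Representation

variable {X : Type*} [TopologicalSpace X] {L : (X →ᵇ ℝ) →ₗ[ℝ] ℝ}

lemma abs_map_sub_map_mul_le (hL : ∀ f, 0 ≤ f → 0 ≤ L f) (f : X →ᵇ ℝ) {χ : X →ᵇ ℝ}
    (hχ : χ ≤ 1) : |L f - L (f * χ)| ≤ ‖f‖ * (L 1 - L χ) := by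
  have key (g : X →ᵇ ℝ) : L g - L (g * χ) ≤ ‖g‖ * (L 1 - L χ) := by
    have h := hL (‖g‖ • (1 - χ) - (g - g * χ)) fun x => by
      have h₁ : g x ≤ ‖g‖ := (le_abs_self _).trans (g.norm_coe_le_norm x)
      have h₂ : χ x ≤ 1 := hχ x
      change 0 ≤ ‖g‖ * (1 - χ x) - (g x - g x * χ x)
      nlinarith
    simpa [smul_eq_mul] using h
  refine abs_le.2 ⟨?_, key f⟩
  have h := key (-f)
  rw [show -f * χ = -(f * χ) from neg_mul f χ, map_neg, map_neg, norm_neg] at h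
  linarith

variable [T2Space X] [LocallyCompactSpace X] [MeasurableSpace X] [BorelSpace X]

lemma exists_measure_integral_eq_of_hasCompactSupport (hL : ∀ f, 0 ≤ f → 0 ≤ L f)
    (hL₁ : L 1 = 1) :
    ∃ Q : Measure X, Q univ ≤ 1 ∧ ∀ f : X →ᵇ ℝ, HasCompactSupport f → ∫ x, f x ∂Q = L f := by
  let Λ : C_c(X, ℝ) →ₚ[ℝ] ℝ := PositiveLinearMap.mk₀
    { toFun := fun f => L f.toBoundedContinuousFunction
      map_add' := fun f g =>
        L.map_add f.toBoundedContinuousFunction g.toBoundedContinuousFunction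
      map_smul' := fun a f => L.map_smul a f.toBoundedContinuousFunction }
    fun f hf => hL _ fun x => hf x
  refine ⟨RealRMK.rieszMeasure Λ, ?_, fun f hf =>
    RealRMK.integral_rieszMeasure Λ ⟨f.toContinuousMap, hf⟩⟩
  rw [isOpen_univ.measure_eq_iSup_isCompact]
  refine iSup₂_le fun K _ => iSup_le fun hK => ?_
  obtain ⟨χ, hχK, -, hχc, hχ⟩ :=
    exists_continuous_one_zero_of_isCompact hK isClosed_empty (disjoint_empty K)
  let χ' : C_c(X, ℝ) := ⟨χ, hχc⟩
  have hχ_le : L χ'.toBoundedContinuousFunction ≤ 1 := by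
    rw [← hL₁, ← sub_nonneg, ← map_sub]
    exact hL _ fun x => sub_nonneg.2 (hχ x).2
  exact (RealRMK.rieszMeasure_le_of_eq_one Λ (f := χ') (fun x => (hχ x).1) hK hχK).trans
    (ENNReal.ofReal_le_one.2 hχ_le)

lemma exists_isProbabilityMeasure_integral_eq (hL : ∀ f, 0 ≤ f → 0 ≤ L f) (hL₁ : L 1 = 1)
    (htight : ∀ ε > 0, ∃ K, IsCompact K ∧
      ∀ f : X →ᵇ ℝ, 0 ≤ f → (∀ x ∈ K, 1 ≤ f x) → 1 - ε ≤ L f) :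
    ∃ Q : Measure X, IsProbabilityMeasure Q ∧ ∀ f : X →ᵇ ℝ, ∫ x, f x ∂Q = L f := by
  obtain ⟨Q, hQ, hQL⟩ := exists_measure_integral_eq_of_hasCompactSupport hL hL₁
  have : IsFiniteMeasure Q := ⟨hQ.trans_lt ENNReal.one_lt_top⟩
  let I : (X →ᵇ ℝ) →ₗ[ℝ] ℝ :=
    { toFun := fun f => ∫ x, f x ∂Q
      map_add' := fun f g => integral_add (f.integrable Q) (g.integrable Q)
      map_smul' := fun a f => integral_const_mul a _ }
  have hI₁ : I 1 ≤ 1 := by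
    simpa [I, measureReal_def] using ENNReal.toReal_mono ENNReal.one_ne_top hQ
  have hIL (f : X →ᵇ ℝ) : I f = L f := by
    refine eq_of_forall_dist_le fun ε hε => ?_
    obtain ⟨δ, hδ, hδε⟩ : ∃ δ > 0, 2 * (‖f‖ + 1) * δ = ε :=
      ⟨ε / (2 * (‖f‖ + 1)), by positivity, by field_simp⟩
    obtain ⟨K, hK, hLK⟩ := htight δ hδ
    obtain ⟨χ, hχK, -, hχc, hχ⟩ :=
      exists_continuous_one_zero_of_isCompact hK isClosed_empty (disjoint_empty K)
    let χ' : X →ᵇ ℝ := (⟨χ, hχc⟩ : C_c(X, ℝ)).toBoundedContinuousFunction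
    have hχ' : χ' ≤ 1 := fun x => (hχ x).2
    have hLχ := hLK χ' (fun x => (hχ x).1) fun x hx => (hχK hx).ge
    have hfI := abs_map_sub_map_mul_le (L := I) (fun g hg => integral_nonneg hg) f hχ'
    have hfL := abs_map_sub_map_mul_le hL f hχ'
    rw [show I (f * χ') = L (f * χ') from hQL _ hχc.mul_left, show I χ' = L χ' from hQL _ hχc]
      at hfI
    calc |I f - L f| ≤ |I f - L (f * χ')| + |L (f * χ') - L f| := abs_sub_le _ _ _
      _ ≤ ‖f‖ * (1 - L χ') + ‖f‖ * (1 - L χ') := by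
        rw [abs_sub_comm (L (f * χ'))]
        rw [hL₁] at hfL
        gcongr
        exact hfI.trans (by gcongr)
      _ ≤ ‖f‖ * δ + ‖f‖ * δ := by gcongr <;> linarith
      _ ≤ ε := by linarith
  refine ⟨Q, isProbabilityMeasure_iff_real.2 ?_, hIL⟩
  simpa [I, hL₁] using hIL 1

end Representation
/-! ### Put prices of a distribution -/

section PutPrices

variable {μ ν : Measure ℝ}

lemma integrable_put [IsFiniteMeasure ν] (hν : ∀ᵐ x ∂ν, 0 ≤ x) (K : ℝ) :
    Integrable (fun x => max (K - x) 0) ν := by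
  refine Integrable.of_bound (C := |K|) (by fun_prop) (hν.mono fun x hx => ?_)
  rw [Real.norm_of_nonneg (le_max_right _ _)]
  exact max_le ((sub_le_self K hx).trans (le_abs_self K)) (abs_nonneg K)

lemma integral_put_of_nonpos (hν : ∀ᵐ x ∂ν, 0 ≤ x) {K : ℝ} (hK : K ≤ 0) :
    ∫ x, max (K - x) 0 ∂ν = 0 :=
  integral_eq_zero_of_ae (hν.mono fun _ hx => max_eq_right (sub_nonpos.2 (hK.trans hx)))

lemma hasDerivWithinAt_integral_put [IsFiniteMeasure ν] (hν : ∀ᵐ x ∂ν, 0 ≤ x) (K : ℝ) :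
    HasDerivWithinAt (fun K => ∫ x, max (K - x) 0 ∂ν) (ν.real (Iic K)) (Ioi K) K := by
  have hslope (y : ℝ) : slope (fun K => ∫ x, max (K - x) 0 ∂ν) K y =
      ∫ x, (max (y - x) 0 - max (K - x) 0) / (y - K) ∂ν := by
    rw [slope_def_field, integral_div, integral_sub (integrable_put hν y) (integrable_put hν K)]
  rw [hasDerivWithinAt_iff_tendsto_slope' self_notMem_Ioi,
    ← integral_indicator_one measurableSet_Iic]
  simp only [funext hslope]
  refine tendsto_integral_filter_of_dominated_convergence (fun _ => 1)
    (.of_forall fun y => by fun_prop) (.of_forall fun y => .of_forall fun x => ?_)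
    (integrable_const _) (.of_forall fun x => ?_)
  · rw [norm_div, Real.norm_eq_abs, Real.norm_eq_abs]
    refine div_le_one_of_le₀ ((abs_max_sub_max_le_abs _ _ _).trans_eq ?_) (abs_nonneg _)
    rw [sub_sub_sub_cancel_right]
  · rcases le_or_gt x K with hx | hx
    · rw [indicator_of_mem (mem_Iic.2 hx)]
      refine tendsto_const_nhds.congr' (eventually_mem_nhdsWithin.mono fun y (hy : K < y) => ?_)
      dsimp only
      rw [max_eq_left (sub_nonneg.2 hx), max_eq_left (sub_nonneg.2 (hx.trans hy.le)),
        sub_sub_sub_cancel_right, div_self (sub_pos.2 hy).ne', Pi.one_apply]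
    · rw [indicator_of_notMem (notMem_Iic.2 hx)]
      refine tendsto_const_nhds.congr' ?_
      filter_upwards [mem_nhdsWithin_of_mem_nhds (Iio_mem_nhds hx)] with y (hy : y < x)
      rw [max_eq_right (sub_nonpos.2 hx.le), max_eq_right (sub_nonpos.2 hy.le), sub_zero, zero_div]

lemma measure_eq_of_integral_put_eq [IsFiniteMeasure μ] [IsFiniteMeasure ν]
    (hμ : ∀ᵐ x ∂μ, 0 ≤ x) (hν : ∀ᵐ x ∂ν, 0 ≤ x)
    (h : ∀ K, 0 ≤ K → ∫ x, max (K - x) 0 ∂μ = ∫ x, max (K - x) 0 ∂ν) : μ = ν := by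
  have h' (K : ℝ) : ∫ x, max (K - x) 0 ∂μ = ∫ x, max (K - x) 0 ∂ν := by
    rcases le_total 0 K with hK | hK
    · exact h K hK
    · rw [integral_put_of_nonpos hμ hK, integral_put_of_nonpos hν hK]
  refine Measure.ext_of_Iic _ _ fun K => ?_
  have hderiv := hasDerivWithinAt_integral_put hμ K
  rw [funext h'] at hderiv
  rw [← measureReal_eq_measureReal_iff]
  exact (uniqueDiffWithinAt_Ioi K).eq_deriv _ hderiv (hasDerivWithinAt_integral_put hν K)

lemma tendsto_integral_put_div [IsFiniteMeasure ν] (hν : ∀ᵐ x ∂ν, 0 ≤ x) :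
    Tendsto (fun R : ℝ => (∫ x, max (R - x) 0 ∂ν) / R) atTop (𝓝 (ν.real univ)) := by
  rw [← integral_indicator_one MeasurableSet.univ]
  simp only [← integral_div, indicator_univ]
  refine tendsto_integral_filter_of_dominated_convergence (fun _ => 1)
    (.of_forall fun R => by fun_prop) ?_ (integrable_const _) (.of_forall fun x => ?_)
  · filter_upwards [eventually_gt_atTop 0] with R hR
    filter_upwards [hν] with x hx
    rw [Real.norm_of_nonneg (by positivity), div_le_one hR]
    exact max_le (by linarith) hR.le
  · have h : Tendsto (fun R : ℝ => 1 - x / R) atTop (𝓝 1) := by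
      simpa using (tendsto_const_nhds (x := (1 : ℝ))).sub (tendsto_const_nhds.div_atTop tendsto_id)
    refine h.congr' ?_
    filter_upwards [eventually_gt_atTop 0, eventually_ge_atTop x] with R hR hxR
    rw [max_eq_left (sub_nonneg.2 hxR), sub_div, div_self hR.ne']

end PutPrices

/-! ### Pricing measures -/

section ClosedSets

variable {X : Type*} [TopologicalSpace X] [HasOuterApproxClosed X] [MeasurableSpace X]
  [BorelSpace X] {μ ν : Measure X} {F : Set X}

lemma tendsto_integral_apprSeq [IsFiniteMeasure μ] (hF : IsClosed F) :
    Tendsto (fun k => ∫ x, (hF.apprSeq k x : ℝ) ∂μ) atTop (𝓝 (μ.real F)) := by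
  simp only [← BoundedContinuousFunction.toReal_lintegral_coe_eq_integral]
  exact (ENNReal.tendsto_toReal (measure_ne_top μ F)).comp
    (HasOuterApproxClosed.tendsto_lintegral_apprSeq hF μ)

lemma measure_eq_one_of_forall_one_le_integral [IsProbabilityMeasure μ] (hF : IsClosed F)
    (h : ∀ f : X →ᵇ ℝ, (∀ x ∈ F, f x = 1) → 1 ≤ ∫ x, f x ∂μ) : μ F = 1 := by
  rw [← ENNReal.toReal_eq_one_iff, ← measureReal_def]
  refine le_antisymm measureReal_le_one (ge_of_tendsto' (tendsto_integral_apprSeq hF) fun k =>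
    h ((hF.apprSeq k).comp _ NNReal.isometry_coe.lipschitz) fun x hx => ?_)
  simp [HasOuterApproxClosed.apprSeq_apply_eq_one hF k hx]

lemma measure_le_of_forall_integral_le [IsFiniteMeasure μ] [μ.WeaklyRegular] [IsFiniteMeasure ν]
    (h : ∀ f : X →ᵇ ℝ, 0 ≤ f → ∫ x, f x ∂μ ≤ ∫ x, f x ∂ν) : μ ≤ ν := by
  have hclosed {F : Set X} (hF : IsClosed F) : μ F ≤ ν F :=
    (ENNReal.toReal_le_toReal (measure_ne_top μ F) (measure_ne_top ν F)).1 <|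
      le_of_tendsto_of_tendsto' (tendsto_integral_apprSeq hF) (tendsto_integral_apprSeq hF) fun k =>
        h ((hF.apprSeq k).comp _ NNReal.isometry_coe.lipschitz) fun x => NNReal.coe_nonneg _
  refine Measure.le_iff.2 fun A hA => ENNReal.le_of_forall_pos_le_add fun ε hε _ => ?_
  obtain ⟨F, hFA, hF, hlt⟩ := hA.exists_isClosed_lt_add (measure_ne_top μ A)
    (ENNReal.coe_ne_zero.2 hε.ne')
  exact hlt.le.trans (add_le_add_left ((hclosed hF).trans (measure_mono hFA)) _)

end ClosedSets

section BoundedClaims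

variable {n : ℕ} {s₀ : ℝ} {P : Set (Path n)} {p : Fin n → ℝ → ℝ} {μ : Fin n → Measure ℝ}

/-- The put on the `i`-th coordinate. Clipping negative prices at `0`, which does not affect the
paths in `Omega`, makes the payoff bounded. -/
def boundedPut (i : Fin (n + 1)) (K : ℝ) : Path n →ᵇ ℝ :=
  .ofNormedAddCommGroup (fun ω => max (K - max (ω i) 0) 0) (by fun_prop) |K| fun ω => by
    rw [Real.norm_of_nonneg (le_max_right _ _)]
    exact max_le (by linarith [le_abs_self K, le_max_right (ω i) 0]) (abs_nonneg K)

lemma boundedPut_apply (i : Fin (n + 1)) (K : ℝ) {ω : Path n} (hω : 0 ≤ ω i) :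
    boundedPut i K ω = max (K - ω i) 0 := by
  change max (K - max (ω i) 0) 0 = _
  rw [max_eq_left hω]

lemma continuous_restr (j : Fin n) : Continuous (restr j : Path n → Fin j → ℝ) :=
  continuous_pi fun _ => continuous_apply _

/-- The last price before the `j`-th period, as a function of the history. -/
def lastPrice (s₀ : ℝ) (j : Fin n) (r : Fin j → ℝ) : ℝ :=
  if h : 0 < (j : ℕ) then r ⟨j - 1, by omega⟩ else s₀

lemma measurable_lastPrice (s₀ : ℝ) (j : Fin n) : Measurable (lastPrice s₀ j) := by
  unfold lastPrice
  split_ifs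
  · exact measurable_pi_apply _
  · exact measurable_const

lemma lastPrice_restr (j : Fin n) {ω : Path n} (hω : ω 0 = s₀) :
    lastPrice s₀ j (restr j ω) = ω j.castSucc := by
  unfold lastPrice restr
  split_ifs with hj
  · exact congrArg ω (Fin.ext (Nat.sub_add_cancel hj))
  · rw [← hω]
    exact congrArg ω (Fin.ext (Nat.eq_zero_of_not_pos hj).symm)

/-- The gains in the `j`-th period from the position `f`, computed with prices truncated at `M`. -/
def truncatedGain (j : Fin n) (f : (Fin j → ℝ) →ᵇ ℝ) (M : ℝ) : Path n →ᵇ ℝ :=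
  f.compContinuous ⟨restr j, continuous_restr j⟩ * (boundedPut j.castSucc M - boundedPut j.succ M)

lemma truncatedGain_apply (j : Fin n) (f : (Fin j → ℝ) →ᵇ ℝ) (M : ℝ) {ω : Path n}
    (hω : ω ∈ Omega n s₀) : truncatedGain j f M ω =
      f (restr j ω) * (max (M - ω j.castSucc) 0 - max (M - ω j.succ) 0) := by
  rw [← boundedPut_apply _ _ (hω.2 _), ← boundedPut_apply _ _ (hω.2 _)]
  rfl

/-- The hedge holds `f` only while the last price is below `M`: there truncating the new price
lowers the gains, and above `M` the truncated gains are nonpositive anyway. -/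
lemma superhedgeable_truncatedGain (hP : P ⊆ Omega n s₀) (j : Fin n) {f : (Fin j → ℝ) →ᵇ ℝ}
    (hf : 0 ≤ f) (M : ℝ) : Superhedgeable p P (truncatedGain j f M) 0 := by
  let Δ : (Fin j → ℝ) → ℝ := {r | lastPrice s₀ j r < M}.indicator f
  have hΔ : Measurable Δ := f.continuous.measurable.indicator
    (measurableSet_lt (measurable_lastPrice s₀ j) measurable_const)
  have hΔb (r : Fin j → ℝ) : |Δ r| ≤ ‖f‖ :=
    (norm_indicator_le_norm_self f r).trans (f.norm_coe_le_norm r)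
  refine (Superhedgeable.gains (Dyn.Nonneg.single j hΔ ⟨_, hΔb⟩
    (indicator_nonneg fun r _ => hf r))).mono (fun ω hω => ?_) le_rfl
  have hfω : 0 ≤ f (restr j ω) := hf _
  rw [truncatedGain_apply j f M (hP hω), Dyn.gains_single]
  simp only [Δ, indicator_apply, mem_ofPred_eq, lastPrice_restr j (hP hω).1]
  split_ifs with hM
  · refine mul_le_mul_of_nonneg_left ?_ hfω
    rw [max_eq_left (sub_nonneg.2 hM.le)]
    linarith [le_max_left (M - ω j.succ) 0]
  · rw [zero_mul, max_eq_right (sub_nonpos.2 (not_lt.1 hM)), zero_sub]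
    exact mul_nonpos_of_nonneg_of_nonpos hfω (neg_nonpos.2 (le_max_right _ _))

variable {L : (Path n →ᵇ ℝ) →ₗ[ℝ] ℝ}

lemma IsPricingFunctional.map_boundedPut (hL : IsPricingFunctional p P L) (hP : P ⊆ Omega n s₀)
    (i : Fin n) {K : ℝ} (hK : 0 ≤ K) : L (boundedPut i.succ K) = p i K :=
  hL.map_put i hK fun _ hω => boundedPut_apply _ _ ((hP hω).2 _)

lemma PutPricesFrom.ae_nonneg (hμ : PutPricesFrom p μ) (i : Fin n) : ∀ᵐ x ∂μ i, 0 ≤ x :=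
  (measure_eq_zero_iff_ae_notMem.1 (hμ.2.1 i)).mono fun _ => notMem_Iio.1

lemma PutPricesFrom.tendsto_div (hμ : PutPricesFrom p μ) (i : Fin n) :
    Tendsto (fun R => p i R / R) atTop (𝓝 1) := by
  have := hμ.1 i
  have h := tendsto_integral_put_div (hμ.ae_nonneg i)
  rw [probReal_univ] at h
  exact h.congr' ((eventually_ge_atTop 0).mono fun R hR => by simp only [hμ.2.2.2 i R hR])

lemma one_sub_sum_put_div_le_indicator {R : ℝ} (hR : 0 < R) (hs₀ : s₀ ≤ R) {ω : Path n}
    (hω : ω ∈ Omega n s₀) :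
    1 - ∑ i : Fin n, (1 - max (R - ω i.succ) 0 / R) ≤ (Icc 0 fun _ => R).indicator 1 ω := by
  have hnonneg (i : Fin n) : 0 ≤ 1 - max (R - ω i.succ) 0 / R := by
    rw [sub_nonneg, div_le_one hR]
    exact max_le (sub_le_self _ (hω.2 _)) hR.le
  by_cases hωR : ω ∈ Icc 0 fun _ => R
  · rw [indicator_of_mem hωR]
    exact sub_le_self _ (Finset.sum_nonneg fun i _ => hnonneg i)
  obtain ⟨i, hi⟩ : ∃ i : Fin n, R < ω i.succ := by
    by_contra! h
    exact hωR ⟨hω.2, Fin.cases (hω.1.trans_le hs₀) h⟩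
  have hle_sum := Finset.single_le_sum (fun i _ => hnonneg i) (Finset.mem_univ i)
  rw [max_eq_right (sub_nonpos.2 hi.le), zero_div, sub_zero] at hle_sum
  rw [indicator_of_notMem hωR]
  exact sub_nonpos.2 hle_sum

lemma IsPricingFunctional.exists_isCompact_one_sub_le (hL : IsPricingFunctional p P L)
    (hP : P ⊆ Omega n s₀) (hμ : PutPricesFrom p μ) {ε : ℝ} (hε : 0 < ε) :
    ∃ K, IsCompact K ∧
      ∀ f : Path n →ᵇ ℝ, 0 ≤ f → (∀ ω ∈ K, 1 ≤ f ω) → 1 - ε ≤ L f := by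
  have hlim : Tendsto (fun R => ∑ i, (1 - p i R / R)) atTop (𝓝 0) := by
    simpa using tendsto_finsetSum Finset.univ fun i _ => (hμ.tendsto_div i).const_sub 1
  obtain ⟨R, hRε, hR, hs₀⟩ := ((hlim.eventually_lt_const hε).and
    ((eventually_gt_atTop 0).and (eventually_ge_atTop s₀))).exists
  refine ⟨Icc 0 fun _ => R, isCompact_Icc, fun f hf hf₁ => ?_⟩
  let g : Path n →ᵇ ℝ := .const _ 1 - ∑ i : Fin n, (.const _ 1 - R⁻¹ • boundedPut i.succ R)
  have hg (ω) (hω : ω ∈ P) : g ω = 1 - ∑ i : Fin n, (1 - max (R - ω i.succ) 0 / R) := by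
    simp [g, boundedPut_apply _ _ ((hP hω).2 _), div_eq_inv_mul]
  calc 1 - ε ≤ 1 - ∑ i, (1 - p i R / R) := by linarith
    _ = L g := by
      simp only [g, map_sub, map_sum, map_smul, hL.map_const, hL.map_boundedPut hP _ hR.le,
        smul_eq_mul, ← div_eq_inv_mul]
    _ ≤ L f := hL.mono_on fun ω hω => (hg ω hω).trans_le <|
      (one_sub_sum_put_div_le_indicator hR hs₀ (hP hω)).trans <|
        indicator_le' hf₁ (fun ω _ => hf ω) ω

lemma IsPricingFunctional.exists_measure (hL : IsPricingFunctional p P L)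
    (hP : P ⊆ Omega n s₀) (hPc : IsClosed P) (hμ : PutPricesFrom p μ) :
    ∃ Q : Measure (Path n), IsProbabilityMeasure Q ∧ Q P = 1 ∧
      ∀ f : Path n →ᵇ ℝ, ∫ ω, f ω ∂Q = L f := by
  obtain ⟨Q, hQ, hQL⟩ := exists_isProbabilityMeasure_integral_eq
    (fun f hf => (map_zero L).ge.trans (hL.mono_on fun ω _ => hf ω)) (hL.map_const 1)
    fun ε hε => hL.exists_isCompact_one_sub_le hP hμ hε
  refine ⟨Q, hQ, measure_eq_one_of_forall_one_le_integral hPc fun f hf => ?_, hQL⟩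
  rw [hQL, ← hL.map_const 1]
  exact hL.mono_on fun ω hω => (hf ω hω).ge

end BoundedClaims

/-! ### Supermartingale laws -/

section WeightedLaw

variable {Ω Y : Type*} [MeasurableSpace Ω] [MeasurableSpace Y] {Q : Measure Ω} {r : Ω → Y}
  {u v : Ω → ℝ} {h : Y → ℝ} {C : ℝ}

/-- The law of `r` under the measure with density `u`. For prices `u`, `v` and a history `r`, the
inequality `E[u | r] ≤ E[v | r]` says that the law weighted by `u` is at most that weighted by
`v`. -/
def weightedLaw (Q : Measure Ω) (r : Ω → Y) (u : Ω → ℝ) : Measure Y :=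
  (Q.withDensity fun ω => ENNReal.ofReal (u ω)).map r

lemma isFiniteMeasure_weightedLaw (hu : Integrable u Q) : IsFiniteMeasure (weightedLaw Q r u) :=
  have := isFiniteMeasure_withDensity_ofReal hu.2
  Measure.isFiniteMeasure_map _ r

lemma integral_weightedLaw (hr : Measurable r) (hu : Integrable u Q) (hu₀ : 0 ≤ᵐ[Q] u)
    (hh : Measurable h) : ∫ y, h y ∂weightedLaw Q r u = ∫ ω, h (r ω) * u ω ∂Q := by
  rw [weightedLaw, integral_map hr.aemeasurable hh.aestronglyMeasurable,
    integral_withDensity_eq_integral_toReal_smul₀ hu.1.aemeasurable.ennreal_ofReal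
      (ae_of_all _ fun _ => ENNReal.ofReal_lt_top)]
  refine integral_congr_ae (hu₀.mono fun ω hω => ?_)
  simp only [ENNReal.toReal_ofReal hω, smul_eq_mul, mul_comm]

lemma integral_mul_sub_nonpos_iff (hr : Measurable r) (hu : Integrable u Q) (hu₀ : 0 ≤ᵐ[Q] u)
    (hv : Integrable v Q) (hv₀ : 0 ≤ᵐ[Q] v) (hh : Measurable h) (hC : ∀ y, |h y| ≤ C) :
    ∫ ω, h (r ω) * (u ω - v ω) ∂Q ≤ 0 ↔
      ∫ y, h y ∂weightedLaw Q r u ≤ ∫ y, h y ∂weightedLaw Q r v := by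
  have hint {w : Ω → ℝ} (hw : Integrable w Q) : Integrable (fun ω => h (r ω) * w ω) Q :=
    hw.bdd_mul (hh.comp hr).aestronglyMeasurable (ae_of_all _ fun ω => hC (r ω))
  simp only [integral_weightedLaw hr hu hu₀ hh, integral_weightedLaw hr hv hv₀ hh, mul_sub]
  rw [integral_sub (hint hu) (hint hv), sub_nonpos]

lemma integral_mul_sub_nonpos (hr : Measurable r) (hu : Integrable u Q) (hu₀ : 0 ≤ᵐ[Q] u)
    (hv : Integrable v Q) (hv₀ : 0 ≤ᵐ[Q] v) (hle : weightedLaw Q r u ≤ weightedLaw Q r v)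
    (hh : Measurable h) (hC : ∀ y, |h y| ≤ C) (hh₀ : 0 ≤ h) :
    ∫ ω, h (r ω) * (u ω - v ω) ∂Q ≤ 0 :=
  have := isFiniteMeasure_weightedLaw (r := r) hv
  (integral_mul_sub_nonpos_iff hr hu hu₀ hv hv₀ hh hC).2 <| integral_mono_measure hle
    (ae_of_all _ hh₀) (.of_bound hh.aestronglyMeasurable C (ae_of_all _ hC))

lemma weightedLaw_le_iff_forall_indicator (hr : Measurable r) (hu : Integrable u Q)
    (hu₀ : 0 ≤ᵐ[Q] u) (hv : Integrable v Q) (hv₀ : 0 ≤ᵐ[Q] v) :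
    weightedLaw Q r u ≤ weightedLaw Q r v ↔ ∀ A, MeasurableSet A →
      ∫ ω, A.indicator (fun _ => (1 : ℝ)) (r ω) * (u ω - v ω) ∂Q ≤ 0 := by
  have := isFiniteMeasure_weightedLaw (r := r) hu
  have := isFiniteMeasure_weightedLaw (r := r) hv
  refine Measure.le_iff.trans (forall₂_congr fun A hA => ?_)
  have hbdd (y : Y) : |A.indicator (fun _ => (1 : ℝ)) y| ≤ 1 :=
    (norm_indicator_le_norm_self (fun _ => (1 : ℝ)) y).trans_eq norm_one
  rw [integral_mul_sub_nonpos_iff hr hu hu₀ hv hv₀ (measurable_const.indicator hA) hbdd,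
    integral_indicator_const _ hA, integral_indicator_const _ hA, smul_eq_mul, mul_one,
    smul_eq_mul, mul_one, measureReal_def, measureReal_def,
    ENNReal.toReal_le_toReal (measure_ne_top _ _) (measure_ne_top _ _)]

lemma weightedLaw_le_of_forall_boundedContinuousFunction {Y : Type*} [TopologicalSpace Y]
    [TopologicalSpace.PseudoMetrizableSpace Y] [MeasurableSpace Y] [BorelSpace Y] {r : Ω → Y}
    (hr : Measurable r) (hu : Integrable u Q) (hu₀ : 0 ≤ᵐ[Q] u) (hv : Integrable v Q)
    (hv₀ : 0 ≤ᵐ[Q] v) (h : ∀ f : Y →ᵇ ℝ, 0 ≤ f → ∫ ω, f (r ω) * (u ω - v ω) ∂Q ≤ 0) :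
    weightedLaw Q r u ≤ weightedLaw Q r v := by
  have := isFiniteMeasure_weightedLaw (r := r) hu
  have := isFiniteMeasure_weightedLaw (r := r) hv
  exact measure_le_of_forall_integral_le fun f hf => (integral_mul_sub_nonpos_iff hr hu hu₀ hv hv₀
    f.continuous.measurable f.norm_coe_le_norm).1 (h f hf)

end WeightedLaw

section SupermartingaleLaw

variable {n : ℕ} {Q : Measure (Path n)}

lemma isSupermartingaleLaw_iff_weightedLaw_le (hint : ∀ i, Integrable (fun ω : Path n => ω i) Q)
    (h₀ : ∀ i, 0 ≤ᵐ[Q] fun ω => ω i) :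
    IsSupermartingaleLaw Q ↔ ∀ j : Fin n, weightedLaw Q (restr j) (fun ω => ω j.succ) ≤
      weightedLaw Q (restr j) fun ω => ω j.castSucc :=
  forall_congr' fun j => (weightedLaw_le_iff_forall_indicator (continuous_restr j).measurable
    (hint _) (h₀ _) (hint _) (h₀ _)).symm

lemma integrable_mul_increment (hint : ∀ i, Integrable (fun ω : Path n => ω i) Q) (j : Fin n)
    {f : (Fin j → ℝ) → ℝ} (hf : Measurable f) {C : ℝ} (hC : ∀ x, |f x| ≤ C) :
    Integrable (fun ω => f (restr j ω) * (ω j.succ - ω j.castSucc)) Q :=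
  ((hint _).sub (hint _)).bdd_mul (hf.comp (continuous_restr j).measurable).aestronglyMeasurable
    (ae_of_all _ fun ω => hC (restr j ω))

lemma Dyn.integrable_gains (hint : ∀ i, Integrable (fun ω : Path n => ω i) Q) (D : Dyn n) :
    Integrable D.gains Q :=
  integrable_finsetSum _ fun j _ => integrable_mul_increment hint j (D.meas j) (D.bdd j).choose_spec

lemma Dyn.integral_gains_nonpos (hint : ∀ i, Integrable (fun ω : Path n => ω i) Q)
    (h₀ : ∀ i, 0 ≤ᵐ[Q] fun ω => ω i) (hQ : IsSupermartingaleLaw Q) {D : Dyn n} (hD : D.Nonneg) :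
    ∫ ω, D.gains ω ∂Q ≤ 0 := by
  unfold Dyn.gains
  rw [integral_finsetSum _ fun j _ =>
    integrable_mul_increment hint j (D.meas j) (D.bdd j).choose_spec]
  refine Finset.sum_nonpos fun j _ => ?_
  exact integral_mul_sub_nonpos (continuous_restr j).measurable (hint _) (h₀ _) (hint _) (h₀ _)
    ((isSupermartingaleLaw_iff_weightedLaw_le hint h₀).1 hQ j) (D.meas j) (D.bdd j).choose_spec
    (hD j)

lemma isSupermartingaleLaw_of_forall_boundedContinuousFunction
    (hint : ∀ i, Integrable (fun ω : Path n => ω i) Q) (h₀ : ∀ i, 0 ≤ᵐ[Q] fun ω => ω i)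
    (h : ∀ (j : Fin n) (f : (Fin j → ℝ) →ᵇ ℝ), 0 ≤ f →
      ∫ ω, f (restr j ω) * (ω j.succ - ω j.castSucc) ∂Q ≤ 0) : IsSupermartingaleLaw Q :=
  (isSupermartingaleLaw_iff_weightedLaw_le hint h₀).2 fun j =>
    weightedLaw_le_of_forall_boundedContinuousFunction (continuous_restr j).measurable
      (hint _) (h₀ _) (hint _) (h₀ _) (h j)

end SupermartingaleLaw

/-! ### Calibrated models -/

section Expectation

variable {n : ℕ} {P : Set (Path n)} {Q : Measure (Path n)}

lemma posE_eq_toENNReal (x : EReal) : posE x = x.toENNReal := rfl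

lemma eexpE_mono {H H' : Path n → EReal} (h : H ≤ᵐ[Q] H') : eexpE Q H ≤ eexpE Q H' :=
  EReal.sub_le_sub
    (EReal.coe_ennreal_le_coe_ennreal_iff.2 <| lintegral_mono_ae <| h.mono fun _ hω =>
      EReal.toENNReal_le_toENNReal hω)
    (EReal.coe_ennreal_le_coe_ennreal_iff.2 <| lintegral_mono_ae <| h.mono fun _ hω =>
      EReal.toENNReal_le_toENNReal (EReal.neg_le_neg_iff.2 hω))

lemma eexp_of_integrable {f : Path n → ℝ} (hf : Integrable f Q) :
    eexp Q f = (∫ ω, f ω ∂Q : ℝ) := by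
  have hneg : ∫⁻ ω, ENNReal.ofReal (-f ω) ∂Q ≠ ⊤ := hf.neg.lintegral_lt_top.ne
  rw [integral_eq_lintegral_pos_part_sub_lintegral_neg_part hf, EReal.coe_sub,
    EReal.coe_ennreal_toReal hf.lintegral_lt_top.ne, EReal.coe_ennreal_toReal hneg, eexp]

lemma Calibrated.eexpE_le_V {pay : Static n → Path n → ℝ} {c : Fin n → ℝ → ℝ}
    (hQ : Calibrated pay c P Q) (hP : MeasurableSet P) (H : Path n → EReal) :
    eexpE Q H ≤ V pay c P H := by
  have := hQ.1
  refine le_sInf ?_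
  rintro _ ⟨X, D, hD, rfl, hH⟩
  calc eexpE Q H ≤ eexpE Q fun ω => ((pay X ω + D.gains ω : ℝ) : EReal) :=
        eexpE_mono (Filter.mem_of_superset ((mem_ae_iff_prob_eq_one hP).2 hQ.2.1) hH)
    _ ≤ X.price c := hQ.2.2 X D hD

end Expectation

section PiMu

variable {n : ℕ} {s₀ : ℝ} {p : Fin n → ℝ → ℝ} {μ : Fin n → Measure ℝ} {P : Set (Path n)}
  {Q : Measure (Path n)}

lemma measurableSet_Omega (n : ℕ) (s₀ : ℝ) : MeasurableSet (Omega n s₀) :=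
  (measurableSet_eq_fun (measurable_pi_apply 0) measurable_const).inter
    (measurableSet_Ici (a := (0 : Path n)))

lemma PiMu.ae_mem_Omega (hQ : Q ∈ PiMu s₀ μ) : ∀ᵐ ω ∂Q, ω ∈ Omega n s₀ :=
  have := hQ.1
  (mem_ae_iff_prob_eq_one (measurableSet_Omega n s₀)).2 hQ.2.1

lemma PiMu.ae_nonneg (hQ : Q ∈ PiMu s₀ μ) (i : Fin (n + 1)) : 0 ≤ᵐ[Q] fun ω => ω i :=
  (PiMu.ae_mem_Omega hQ).mono fun _ hω => hω.2 i

lemma PiMu.measurePreserving (hQ : Q ∈ PiMu s₀ μ) (i : Fin n) :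
    MeasurePreserving (fun ω : Path n => ω i.succ) Q (μ i) :=
  ⟨measurable_pi_apply _, hQ.2.2 i⟩

lemma PiMu.integrable_coord (hQ : Q ∈ PiMu s₀ μ) (hμ : ∀ i, Integrable id (μ i))
    (i : Fin (n + 1)) : Integrable (fun ω : Path n => ω i) Q := by
  have := hQ.1
  cases i using Fin.cases with
  | zero => exact (integrable_const s₀).congr ((PiMu.ae_mem_Omega hQ).mono fun _ hω => hω.1.symm)
  | succ i => exact (PiMu.measurePreserving hQ i).integrable_comp_of_integrable (hμ i)

lemma PiMu.integrable_put (hQ : Q ∈ PiMu s₀ μ) (hμ : PutPricesFrom p μ) (i : Fin n) (K : ℝ) :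
    Integrable (fun ω : Path n => max (K - ω i.succ) 0) Q :=
  have := hμ.1 i
  (PiMu.measurePreserving hQ i).integrable_comp_of_integrable
    (RobustFin.integrable_put (hμ.ae_nonneg i) K)

lemma PiMu.integral_put (hQ : Q ∈ PiMu s₀ μ) (hμ : PutPricesFrom p μ) (i : Fin n) {K : ℝ}
    (hK : 0 ≤ K) : ∫ ω : Path n, max (K - ω i.succ) 0 ∂Q = p i K := by
  rw [hμ.2.2.2 i K hK, ← hQ.2.2 i,
    integral_map (PiMu.measurePreserving hQ i).aemeasurable (by fun_prop)]

lemma PiMu.integrable_putPayoff (hQ : Q ∈ PiMu s₀ μ) (hμ : PutPricesFrom p μ) (X : Static n) :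
    Integrable X.putPayoff Q :=
  have := hQ.1
  (integrable_const _).add <| integrable_finsetSum _ fun _ _ =>
    (PiMu.integrable_put hQ hμ _ _).const_mul _

lemma PiMu.integral_putPayoff (hQ : Q ∈ PiMu s₀ μ) (hμ : PutPricesFrom p μ) (X : Static n) :
    ∫ ω, X.putPayoff ω ∂Q = X.price p := by
  have := hQ.1
  have hint (k : Fin X.m) :
      Integrable (fun ω : Path n => X.coeff k * max (X.strike k - ω (X.idx k).succ) 0) Q :=
    (PiMu.integrable_put hQ hμ _ _).const_mul _
  unfold Static.putPayoff Static.price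
  rw [integral_add (integrable_const _) (integrable_finsetSum _ fun k _ => hint k),
    integral_finsetSum _ fun k _ => hint k]
  simp [integral_const_mul, PiMu.integral_put hQ hμ _ (X.strike_nonneg _)]

lemma MSetP.calibrated (hQ : Q ∈ MSetP s₀ μ P) (hμ : PutPricesFrom p μ) :
    Calibrated Static.putPayoff p P Q := by
  obtain ⟨⟨hQμ, hQs⟩, hQP⟩ := hQ
  refine ⟨hQμ.1, hQP, fun X D hD => ?_⟩
  have hint := PiMu.integrable_coord hQμ hμ.2.2.1
  have hX := PiMu.integrable_putPayoff hQμ hμ X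
  have hgains := D.integrable_gains hint
  rw [eexp_of_integrable (f := fun ω => X.putPayoff ω + D.gains ω) (hX.add hgains),
    EReal.coe_le_coe_iff, integral_add hX hgains,
    PiMu.integral_putPayoff hQμ hμ, add_le_iff_nonpos_right]
  exact D.integral_gains_nonpos hint (PiMu.ae_nonneg hQμ) hQs hD

end PiMu

section ModelOfPricingFunctional

variable {n : ℕ} {s₀ : ℝ} {p : Fin n → ℝ → ℝ} {μ : Fin n → Measure ℝ} {P : Set (Path n)}
  {Q : Measure (Path n)} {L : (Path n →ᵇ ℝ) →ₗ[ℝ] ℝ}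

lemma IsPricingFunctional.mem_PiMu [IsProbabilityMeasure Q] (hL : IsPricingFunctional p P L)
    (hP : P ⊆ Omega n s₀) (hμ : PutPricesFrom p μ) (hQP : Q P = 1)
    (hQL : ∀ f : Path n →ᵇ ℝ, ∫ ω, f ω ∂Q = L f) : Q ∈ PiMu s₀ μ := by
  have hΩ : Q (Omega n s₀) = 1 := le_antisymm prob_le_one (hQP.ge.trans (measure_mono hP))
  have hcoord (i : Fin n) : Measurable fun ω : Path n => ω i.succ := measurable_pi_apply _
  refine ⟨‹_›, hΩ, fun i => ?_⟩
  have hnonneg : ∀ᵐ ω ∂Q, 0 ≤ ω i.succ :=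
    Filter.mem_of_superset ((mem_ae_iff_prob_eq_one (measurableSet_Omega n s₀)).2 hΩ)
      fun ω hω => hω.2 _
  have := hμ.1 i
  have := Measure.isProbabilityMeasure_map (μ := Q) (hcoord i).aemeasurable
  refine measure_eq_of_integral_put_eq
    ((ae_map_iff (hcoord i).aemeasurable measurableSet_Ici).2 hnonneg) (hμ.ae_nonneg i)
    fun K hK => ?_
  calc ∫ x, max (K - x) 0 ∂Q.map (fun ω => ω i.succ)
      = ∫ ω, max (K - ω i.succ) 0 ∂Q := integral_map (hcoord i).aemeasurable (by fun_prop)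
    _ = ∫ ω, boundedPut i.succ K ω ∂Q :=
      integral_congr_ae (hnonneg.mono fun ω hω => (boundedPut_apply _ _ hω).symm)
    _ = ∫ x, max (K - x) 0 ∂μ i := by
      rw [hQL, hL.map_boundedPut hP i hK, hμ.2.2.2 i K hK]

lemma abs_put_sub_put_le (M a b : ℝ) : |max (M - a) 0 - max (M - b) 0| ≤ |b - a| :=
  (abs_max_sub_max_le_abs _ _ _).trans_eq (by rw [sub_sub_sub_cancel_left])

lemma tendsto_integral_truncatedGain (hint : ∀ i, Integrable (fun ω : Path n => ω i) Q)
    (hΩ : ∀ᵐ ω ∂Q, ω ∈ Omega n s₀) (j : Fin n) (f : (Fin j → ℝ) →ᵇ ℝ) :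
    Tendsto (fun M => ∫ ω, truncatedGain j f M ω ∂Q) atTop
      (𝓝 (∫ ω, f (restr j ω) * (ω j.succ - ω j.castSucc) ∂Q)) := by
  refine tendsto_integral_filter_of_dominated_convergence
    (fun ω => ‖f (restr j ω) * (ω j.succ - ω j.castSucc)‖)
    (.of_forall fun M => (truncatedGain j f M).continuous.aestronglyMeasurable)
    (.of_forall fun M => hΩ.mono fun ω hω => ?_)
    (integrable_mul_increment hint j f.continuous.measurable f.norm_coe_le_norm).norm
    (hΩ.mono fun ω hω => ?_)
  · rw [truncatedGain_apply j f M hω, norm_mul, norm_mul]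
    gcongr
    exact abs_put_sub_put_le _ _ _
  · refine tendsto_const_nhds.congr' ?_
    filter_upwards [eventually_ge_atTop (ω j.castSucc), eventually_ge_atTop (ω j.succ)]
      with M ha hb
    rw [truncatedGain_apply j f M hω, max_eq_left (sub_nonneg.2 ha), max_eq_left (sub_nonneg.2 hb),
      sub_sub_sub_cancel_left]

lemma IsPricingFunctional.isSupermartingaleLaw (hL : IsPricingFunctional p P L)
    (hP : P ⊆ Omega n s₀) (hμ : PutPricesFrom p μ) (hQ : Q ∈ PiMu s₀ μ)
    (hQL : ∀ f : Path n →ᵇ ℝ, ∫ ω, f ω ∂Q = L f) : IsSupermartingaleLaw Q := by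
  have hint := PiMu.integrable_coord hQ hμ.2.2.1
  refine isSupermartingaleLaw_of_forall_boundedContinuousFunction hint (PiMu.ae_nonneg hQ)
    fun j f hf => ?_
  refine le_of_tendsto' (tendsto_integral_truncatedGain hint (PiMu.ae_mem_Omega hQ) j f)
    fun M => ?_
  exact (hQL _).trans_le (hL _ _ (superhedgeable_truncatedGain hP j hf M))

lemma IsPricingFunctional.exists_mem_MSetP (hL : IsPricingFunctional p P L)
    (hP : P ⊆ Omega n s₀) (hPc : IsClosed P) (hμ : PutPricesFrom p μ) :
    ∃ Q ∈ MSetP s₀ μ P, ∀ f : Path n →ᵇ ℝ, ∫ ω, f ω ∂Q = L f := by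
  obtain ⟨Q, _, hQP, hQL⟩ := hL.exists_measure hP hPc hμ
  have hQ := hL.mem_PiMu hP hμ hQP hQL
  exact ⟨Q, ⟨⟨hQ, hL.isSupermartingaleLaw hP hμ hQ hQL⟩, hQP⟩, hQL⟩

end ModelOfPricingFunctional

/-! ### Upper semicontinuous claims -/

section LipschitzEnvelope

variable {X : Type*} [PseudoEMetricSpace X] {h : X → ℝ≥0∞}

/-- The largest `k`-Lipschitz minorant of `h` (its Pasch–Hausdorff envelope), truncated at `k`. -/
def lipschitzEnvelope (h : X → ℝ≥0∞) (k : ℝ≥0) (x : X) : ℝ≥0∞ :=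
  min k (⨅ y, h y + k * edist x y)

lemma lipschitzEnvelope_mono (h : X → ℝ≥0∞) : Monotone (lipschitzEnvelope h) := fun k l hkl x => by
  unfold lipschitzEnvelope
  gcongr

lemma lipschitzEnvelope_le (h : X → ℝ≥0∞) (k : ℝ≥0) (x : X) : lipschitzEnvelope h k x ≤ h x :=
  (min_le_right _ _).trans ((iInf_le _ x).trans_eq (by simp))

lemma continuous_lipschitzEnvelope (h : X → ℝ≥0∞) (k : ℝ≥0) :
    Continuous (lipschitzEnvelope h k) := by
  refine continuous_const.min (continuous_of_le_add_edist k ENNReal.coe_ne_top fun x y => ?_)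
  rw [ENNReal.iInf_add]
  refine iInf_mono fun z => ?_
  calc h z + k * edist x z ≤ h z + k * (edist x y + edist y z) := by
        gcongr
        exact edist_triangle x y z
    _ = h z + k * edist y z + k * edist x y := by ring

lemma exists_boundedContinuousFunction_ofReal_eq {X : Type*} [TopologicalSpace X]
    {g : X → ℝ≥0∞} (hg : Continuous g) {C : ℝ≥0} (hC : ∀ x, g x ≤ C) :
    ∃ f : X →ᵇ ℝ, 0 ≤ f ∧ ∀ x, ENNReal.ofReal (f x) = g x := by
  have hfin (x : X) : g x ≠ ⊤ := ne_top_of_le_ne_top ENNReal.coe_ne_top (hC x)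
  refine ⟨.ofNormedAddCommGroup (fun x => (g x).toReal)
    (ENNReal.continuousOn_toReal.comp_continuous hg hfin) C fun x => ?_,
    fun x => ENNReal.toReal_nonneg, fun x => ENNReal.ofReal_toReal (hfin x)⟩
  rw [Real.norm_of_nonneg ENNReal.toReal_nonneg]
  exact ENNReal.toReal_mono ENNReal.coe_ne_top (hC x)

lemma exists_le_lipschitzEnvelope {x : X} (hh : LowerSemicontinuousAt h x) {b : ℝ≥0}
    (hb : b < h x) : ∃ k : ℕ, (b : ℝ≥0∞) ≤ lipschitzEnvelope h k x := by
  obtain ⟨ε, hε, hball⟩ := EMetric.mem_nhds_iff.1 (hh b hb)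
  obtain ⟨k, hk⟩ : ∃ k : ℕ, (b : ℝ≥0∞) < k * min ε 1 :=
    ENNReal.exists_nat_mul_gt (lt_min hε one_pos).ne' ENNReal.coe_ne_top
  have hbk : (b : ℝ≥0∞) ≤ k := hk.le.trans (mul_le_of_le_one_right' (min_le_right _ _))
  refine ⟨k, le_min hbk (le_iInf fun y => ?_)⟩
  rcases lt_or_ge (edist y x) ε with hy | hy
  · exact (hball hy).le.trans le_self_add
  · calc (b : ℝ≥0∞) ≤ k * min ε 1 := hk.le
      _ ≤ h y + k * edist x y := by
        rw [edist_comm]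
        exact le_add_left (mul_le_mul' le_rfl ((min_le_left _ _).trans hy))

lemma iSup_lipschitzEnvelope {x : X} (hh : LowerSemicontinuousAt h x) :
    ⨆ k : ℕ, lipschitzEnvelope h k x = h x := by
  refine le_antisymm (iSup_le fun k => lipschitzEnvelope_le h k x)
    (ENNReal.le_of_forall_nnreal_lt fun b hb => ?_)
  obtain ⟨k, hk⟩ := exists_le_lipschitzEnvelope hh hb
  exact hk.trans (le_iSup (fun k : ℕ => lipschitzEnvelope h k x) k)

lemma lintegral_le_of_forall_boundedContinuousFunction [MeasurableSpace X] [OpensMeasurableSpace X]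
    {Q : Measure X} (hh : LowerSemicontinuous h) {b : ℝ≥0∞}
    (hb : ∀ f : X →ᵇ ℝ, 0 ≤ f → (∀ x, ENNReal.ofReal (f x) ≤ h x) →
      ∫⁻ x, ENNReal.ofReal (f x) ∂Q ≤ b) : ∫⁻ x, h x ∂Q ≤ b := by
  have hbound (k : ℕ) : ∫⁻ x, lipschitzEnvelope h k x ∂Q ≤ b := by
    obtain ⟨f, hf₀, hf⟩ := exists_boundedContinuousFunction_ofReal_eq
      (continuous_lipschitzEnvelope h k) fun x => min_le_left _ _
    simp only [← hf]
    exact hb f hf₀ fun x => (hf x).trans_le (lipschitzEnvelope_le h k x)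
  calc ∫⁻ x, h x ∂Q = ∫⁻ x, ⨆ k : ℕ, lipschitzEnvelope h k x ∂Q := by
        simp only [iSup_lipschitzEnvelope (hh _)]
    _ = ⨆ k : ℕ, ∫⁻ x, lipschitzEnvelope h k x ∂Q :=
      lintegral_iSup (fun k => (continuous_lipschitzEnvelope h k).measurable)
        ((lipschitzEnvelope_mono h).comp Nat.mono_cast)
    _ ≤ b := iSup_le hbound

end LipschitzEnvelope

lemma lowerSemicontinuous_piecewise_top {X β : Type*} [TopologicalSpace X] [PartialOrder β]
    [OrderTop β] {P : Set X} (hP : IsClosed P) {f : X → β} (hf : LowerSemicontinuousOn f P) :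
    LowerSemicontinuous (P.piecewise f fun _ => ⊤) := by
  intro x a ha
  by_cases hx : x ∈ P
  · rw [piecewise_eq_of_mem _ _ _ hx] at ha
    filter_upwards [eventually_nhdsWithin_iff.1 (hf x hx a ha)] with y hy
    by_cases hyP : y ∈ P
    · simpa [hyP] using hy hyP
    · simpa [hyP] using ha.trans_le le_top
  · rw [piecewise_eq_of_notMem _ _ _ hx] at ha
    filter_upwards [hP.isOpen_compl.mem_nhds hx] with y hy
    rwa [piecewise_eq_of_notMem _ _ _ hy]

section UpperSemicontinuousClaims

variable {n : ℕ} {P : Set (Path n)} {H : Path n → EReal} {Q : Measure (Path n)} {C c : ℝ}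

lemma coe_sub_coe_eq_of_add_eq_add {a b c d : ℝ≥0∞} (ha : a ≠ ⊤) (hc : c ≠ ⊤)
    (h : a + d = c + b) : (a : EReal) - b = c - d := by
  lift a to ℝ≥0 using ha
  lift c to ℝ≥0 using hc
  induction d with
  | top =>
    obtain rfl : b = ⊤ := by simpa using h.symm
    simp
  | coe d =>
    lift b to ℝ≥0 using by rintro rfl; simp at h
    have hreal : (a : ℝ) + d = c + b := mod_cast h
    have hsub : (a : ℝ) - b = c - d := by linarith
    exact congrArg Real.toEReal hsub

lemma continuous_toENNReal_sub (C : ℝ) : Continuous fun x => ((C : EReal) - x).toENNReal :=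
  EReal.continuous_toENNReal.comp <| continuous_iff_continuousAt.2 fun x =>
    (EReal.continuousAt_add (p := (↑C, -x)) (by simp) (by simp)).comp
      (f := fun y => ((C : EReal), -y)) (by fun_prop)

lemma le_coe_sub_of_ofReal_le {x : EReal} (hx : x ≤ C) {y : ℝ}
    (hy : ENNReal.ofReal y ≤ ((C : EReal) - x).toENNReal) : x ≤ (C - y : ℝ) := by
  induction x with
  | bot => exact bot_le
  | top => simp at hx
  | coe x =>
    rw [EReal.coe_le_coe_iff] at hx ⊢
    rw [← EReal.coe_sub, EReal.real_coe_toENNReal,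
      ENNReal.ofReal_le_ofReal_iff (sub_nonneg.2 hx)] at hy
    exact le_sub_comm.1 hy

lemma posE_add_toENNReal_sub (hC : 0 ≤ C) {x : EReal} (hx : x ≤ C) :
    posE x + ((C : EReal) - x).toENNReal = ENNReal.ofReal C + posE (-x) := by
  have hC' : (0 : EReal) ≤ C := mod_cast hC
  have hCx : 0 ≤ (C : EReal) - x := EReal.sub_nonneg (by simp) (by simp) |>.2 hx
  have h₁ : posE x = ENNReal.ofReal C - ((C : EReal) - x).toENNReal := by
    rw [← EReal.real_coe_toENNReal, ← EReal.toENNReal_sub hCx, posE_eq_toENNReal,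
      sub_eq_add_neg _ x, EReal.sub_add_cancel_left, neg_neg]
  have h₂ : posE (-x) = ((C : EReal) - x).toENNReal - ENNReal.ofReal C := by
    rw [← EReal.real_coe_toENNReal, ← EReal.toENNReal_sub hC', posE_eq_toENNReal,
      sub_eq_add_neg (C : EReal), EReal.add_sub_cancel_left]
  rw [h₁, h₂, tsub_add_eq_max, max_comm, ← tsub_add_eq_max, add_comm]

lemma eexpE_eq_sub_lintegral [IsProbabilityMeasure Q] (hC : 0 ≤ C) (hHC : ∀ᵐ ω ∂Q, H ω ≤ C)
    (hH : AEMeasurable (fun ω => ((C : EReal) - H ω).toENNReal) Q) :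
    eexpE Q H = C - (∫⁻ ω, ((C : EReal) - H ω).toENNReal ∂Q : ℝ≥0∞) := by
  have hfin : ∫⁻ ω, posE (H ω) ∂Q ≠ ⊤ := by
    refine ne_top_of_le_ne_top (ENNReal.ofReal_ne_top (r := C)) ?_
    calc ∫⁻ ω, posE (H ω) ∂Q ≤ ∫⁻ _, ENNReal.ofReal C ∂Q :=
          lintegral_mono_ae (hHC.mono fun _ hω => EReal.toENNReal_le_toENNReal hω)
      _ = ENNReal.ofReal C := by simp
  have hadd : ∫⁻ ω, posE (H ω) ∂Q + ∫⁻ ω, ((C : EReal) - H ω).toENNReal ∂Q =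
      ENNReal.ofReal C + ∫⁻ ω, posE (-H ω) ∂Q := by
    rw [← lintegral_add_right' _ hH,
      lintegral_congr_ae (hHC.mono fun _ hω => posE_add_toENNReal_sub hC hω),
      lintegral_add_left measurable_const, lintegral_const, measure_univ, mul_one]
  rw [eexpE, coe_sub_coe_eq_of_add_eq_add hfin ENNReal.ofReal_ne_top hadd,
    EReal.coe_ennreal_ofReal, max_eq_left hC]

lemma le_eexpE_of_forall_le_integral [IsProbabilityMeasure Q] (hP : IsClosed P) (hQP : Q P = 1)
    (hH : UpperSemicontinuousOn H P) (hC : 0 ≤ C) (hHC : ∀ ω ∈ P, H ω ≤ C)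
    (hc : ∀ g : Path n →ᵇ ℝ, (∀ ω ∈ P, H ω ≤ g ω) → c ≤ ∫ ω, g ω ∂Q) :
    (c : EReal) ≤ eexpE Q H := by
  have hQP' : ∀ᵐ ω ∂Q, ω ∈ P := (mem_ae_iff_prob_eq_one hP.measurableSet).2 hQP
  let h : Path n → ℝ≥0∞ := P.piecewise (fun ω => ((C : EReal) - H ω).toENNReal) fun _ => ⊤
  have hh : LowerSemicontinuous h :=
    lowerSemicontinuous_piecewise_top hP <|
      (continuous_toENNReal_sub C).comp_upperSemicontinuousOn_antitone hH fun _ _ hxy =>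
        EReal.toENNReal_le_toENNReal (EReal.sub_le_sub le_rfl hxy)
  have hh_eq : h =ᵐ[Q] fun ω => ((C : EReal) - H ω).toENNReal :=
    hQP'.mono fun ω hω => piecewise_eq_of_mem _ _ _ hω
  have hbound : ∫⁻ ω, h ω ∂Q ≤ ENNReal.ofReal (C - c) := by
    refine lintegral_le_of_forall_boundedContinuousFunction hh fun f hf₀ hfh => ?_
    rw [← ofReal_integral_eq_lintegral_ofReal (f.integrable Q) (ae_of_all _ hf₀)]
    refine ENNReal.ofReal_le_ofReal ?_
    have hfH (ω) (hω : ω ∈ P) : H ω ≤ (.const _ C - f : Path n →ᵇ ℝ) ω :=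
      le_coe_sub_of_ofReal_le (hHC ω hω) ((hfh ω).trans_eq (piecewise_eq_of_mem _ _ _ hω))
    have hint : c ≤ ∫ ω, (C - f ω) ∂Q := hc _ hfH
    rw [integral_sub (integrable_const C) (f.integrable Q), integral_const, probReal_univ,
      one_smul] at hint
    exact le_sub_comm.1 hint
  rw [eexpE_eq_sub_lintegral hC (hQP'.mono hHC) (hh.measurable.aemeasurable.congr hh_eq),
    ← lintegral_congr_ae hh_eq]
  have hcC : c ≤ C := (hc (.const _ C) hHC).trans_eq (by simp)
  calc (c : EReal) = C - (ENNReal.ofReal (C - c) : ℝ≥0∞) := by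
        rw [EReal.coe_ennreal_ofReal, max_eq_left (sub_nonneg.2 hcC), ← EReal.coe_sub,
          sub_sub_cancel]
    _ ≤ C - (∫⁻ ω, h ω ∂Q : ℝ≥0∞) :=
      EReal.sub_le_sub le_rfl (EReal.coe_ennreal_le_coe_ennreal_iff.2 hbound)

end UpperSemicontinuousClaims

/-! ### Duality -/

lemma V_le_iSup_MSetP {n : ℕ} {s₀ : ℝ} {P : Set (Path n)} (hP : P ⊆ Omega n s₀)
    (hPc : IsClosed P) {p : Fin n → ℝ → ℝ} {μ : Fin n → Measure ℝ} (hμ : PutPricesFrom p μ)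
    {H : Path n → EReal} (hH : UpperSemicontinuousOn H P) (hHC : ∃ C : ℝ, ∀ ω ∈ P, H ω ≤ C) :
    V Static.putPayoff p P H ≤ ⨆ Q ∈ MSetP s₀ μ P, eexpE Q H := by
  obtain ⟨C, hC, hHC⟩ : ∃ C : ℝ, 0 ≤ C ∧ ∀ ω ∈ P, H ω ≤ C := by
    obtain ⟨C, hC⟩ := hHC
    exact ⟨max C 0, le_max_right _ _, fun ω hω =>
      (hC ω hω).trans (EReal.coe_le_coe_iff.2 (le_max_left _ _))⟩
  refine EReal.ge_of_forall_gt_iff_ge.1 fun c hc => ?_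
  obtain ⟨L, hL, hcL⟩ := exists_isPricingFunctional hHC hc.le
  obtain ⟨Q, hQ, hQL⟩ := hL.exists_mem_MSetP hP hPc hμ
  have : IsProbabilityMeasure Q := hQ.1.1.1
  refine le_iSup₂_of_le Q hQ (le_eexpE_of_forall_le_integral hPc hQ.2 hH hC hHC fun g hg => ?_)
  exact (hcL g hg).trans_eq (hQL g).symm

theorem duality_puts_bounded_general {n : ℕ} {s₀ : ℝ} {P : Set (Path n)} (hP : P ⊆ Omega n s₀)
    (hPc : IsClosed P) {p : Fin n → ℝ → ℝ} {μ : Fin n → Measure ℝ} (hμ : PutPricesFrom p μ)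
    {H : Path n → EReal} (hH : UpperSemicontinuousOn H P) (hHC : ∃ C : ℝ, ∀ ω ∈ P, H ω ≤ C) :
    (⨆ Q ∈ MSetP s₀ μ P, eexpE Q H) =
      (⨆ Q ∈ {Q : Measure (Path n) | Calibrated Static.putPayoff p P Q}, eexpE Q H) ∧
    (⨆ Q ∈ {Q : Measure (Path n) | Calibrated Static.putPayoff p P Q}, eexpE Q H) =
      V Static.putPayoff p P H := by
  have h₁ : (⨆ Q ∈ MSetP s₀ μ P, eexpE Q H) ≤
      ⨆ Q ∈ {Q : Measure (Path n) | Calibrated Static.putPayoff p P Q}, eexpE Q H :=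
    biSup_mono fun _ hQ => MSetP.calibrated hQ hμ
  have h₂ : (⨆ Q ∈ {Q : Measure (Path n) | Calibrated Static.putPayoff p P Q}, eexpE Q H) ≤
      V Static.putPayoff p P H :=
    iSup₂_le fun _ hQ => Calibrated.eexpE_le_V hQ hPc.measurableSet H
  have h₃ : V Static.putPayoff p P H ≤ ⨆ Q ∈ MSetP s₀ μ P, eexpE Q H :=
    V_le_iSup_MSetP hP hPc hμ hH hHC
  exact ⟨h₁.antisymm (h₂.trans h₃), h₂.antisymm (h₃.trans h₁)⟩

lemma continuous_tailCoords (n : ℕ) : Continuous (tailCoords : Path n → Fin n → ℝ) :=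
  continuous_pi fun i => continuous_apply i.succ

/-- Theorem 4.3, pricing–hedging duality with traded puts for
claims bounded from above: if the market input admits no WFLVR and `μ_i` are the
measures defined from the put prices, then for upper semi-continuous `G` bounded
from above, the primal value over `M⁻_{μ,𝔓}`, the supremum over market calibrated
models, and the put-based superhedging price all coincide. -/
theorem duality_puts_bounded
    {n : ℕ} (hn : 1 ≤ n) {s₀ : ℝ} (hs₀ : 0 < s₀)
    (P : Set (Path n)) (hPsub : P ⊆ Omega n s₀) (hPclosed : IsClosed P)
    (p : Fin n → ℝ → ℝ) (μ : Fin n → Measure ℝ) (hμ : PutPricesFrom p μ)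
    (hNA : ¬ WFLVR Static.putPayoff p P)
    (G : (Fin n → ℝ) → EReal) (hGtop : ∀ s, G s ≠ ⊤)
    (hGusc : UpperSemicontinuousOn G {s | ∀ i, 0 ≤ s i})
    (hGbdd : ∃ C : ℝ, ∀ s : Fin n → ℝ, (∀ i, 0 ≤ s i) → G s ≤ (C : EReal)) :
    (⨆ Q ∈ MSetP s₀ μ P, eexpE Q (fun ω => G (tailCoords ω))) =
      (⨆ Q ∈ {Q : Measure (Path n) | Calibrated Static.putPayoff p P Q},
        eexpE Q (fun ω => G (tailCoords ω))) ∧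
    (⨆ Q ∈ {Q : Measure (Path n) | Calibrated Static.putPayoff p P Q},
        eexpE Q (fun ω => G (tailCoords ω))) =
      V Static.putPayoff p P (fun ω => G (tailCoords ω)) :=
  duality_puts_bounded_general hPsub hPclosed hμ
    (hGusc.comp (continuous_tailCoords n).continuousOn fun _ hω _ => (hPsub hω).2 _)
    (hGbdd.imp fun _ hC _ hω => hC _ fun _ => (hPsub hω).2 _)

end RobustFin
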